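/- arXiv:1808.04948 — 6 statements merged into one kernel-verified Lean document; each statement's English description precedes it below -/
import Mathlib

section
/- Fix K ∈ ℕ with K ≥ 1. Call a vertex v of a tree internal (with respect to K) if for every neighbour w of v, the component containing v of the forest obtained by deleting the edge vw has more than K vertices. Let R be the set of internal vertices of 𝒯_n. Then for every ε > 0, the probability that (1−ε)·h(K)·n ≤ |R| ≤ (1+ε)·h(K)·n tends to 1 as n → ∞, where h(K) := 1 − ∑_{k=1}^{K} k^{k−1} e^{−k}/k!. -/
open Filter Topology

/-!
A vertex `v` of a tree is not internal exactly when some edge `vw` cuts off a component `S ∋ v` with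
at most `K` vertices. Such an `S` is a set left by exactly one edge, and for `n > 2K` it is
determined by `v`. So `n - |R|` is the number `X` of small cuts `(S, v, w)` (with side
`S` and root `v`), and the theorem follows from Chebyshev's inequality once
`E X ~ c n` and `E X² ≤ (c² + o(1)) n²` with `c = 1 - h(K)`, together with `h(K) > 0`.

Trees in which `vw` is the only edge leaving `S` correspond to pairs of a tree on `S` and a tree on
`Sᶜ` (`sum_trees_cut`). With `t n` the number of trees on `n` vertices, the number of pairs of a
tree and a cut with `|S| = k` is therefore `C(n,k) k (n-k) t(k) t(n-k)` (`sum_card_cuts`).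

* Summing over all `k` counts oriented edges, which gives a recursion for `t` (`treeCount_rec`).
  Abel's identity (`abel_identity`) solves it, and the result is Cayley's formula `t n = n ^ (n-2)`
  (`treeCount_eq`).
* Given Cayley's formula, the mean number of cuts with `|S| = k`, divided by `n`, is up to an
  explicit factor the probability that a binomial variable with parameters `n` and `k/n` equals `k`, so it
  tends to `k^(k-1) e^(-k) / k!` by the Poisson limit theorem (`tendsto_cutShare`).
* Two small cuts either have disjoint sides, or the side of one contains the root of the other.
  There are at most `2Kn` pairs of the second kind. Pairs of the first kind are bounded by removing
  the first side and counting small cuts of the tree that remains (`card_cuts_sq_le`), so that the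
  second moment is bounded by means already computed (`sum_card_cuts_sq_le`).

Since `X ≤ n`, the limit of the mean gives `h(K) ≥ 0` for every `K`, and `h(K) > h(K+1)`
makes it positive (`hfun_pos`).
-/

/-- The probability that a uniformly random labelled tree on `n` vertices satisfies `p`. -/
noncomputable def treeProb (n : ℕ) (p : SimpleGraph (Fin n) → Prop) : ℝ :=
  (Nat.card {G : SimpleGraph (Fin n) // G.IsTree ∧ p G} : ℝ) /
    (Nat.card {G : SimpleGraph (Fin n) // G.IsTree} : ℝ)

/-- `h(K) = 1 - ∑_{k=1}^K k^{k-1} e^{-k}/k!`. -/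
noncomputable def hfun (K : ℕ) : ℝ :=
  1 - ∑ k ∈ Finset.Icc 1 K, (k : ℝ) ^ (k - 1) * Real.exp (-(k : ℝ)) / (Nat.factorial k)

/-- A vertex `v` is internal (w.r.t. `K`) if for every neighbour `w` of `v`, the component
containing `v` of the forest obtained by deleting the edge `vw` has more than `K` vertices. -/
def InternalVtx {n : ℕ} (K : ℕ) (G : SimpleGraph (Fin n)) (v : Fin n) : Prop :=
  ∀ w : Fin n, G.Adj v w →
    K < Nat.card {u : Fin n // (G.deleteEdges {s(v, w)}).Reachable v u}

section Proof

open scoped Classical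

/-! ### Cuts consisting of a single edge -/

/-- The edge `vw` is the only edge of `G` between `S` and its complement, with `v ∈ S` and `w ∉ S`.
In a tree this says exactly that `S` is the component of `v` after deleting the edge `vw`. The set
`S` is called a side of the cut, and `v` its root. -/
def OneEdgeCut {V : Type*} (G : SimpleGraph V) (S : Set V) (v w : V) : Prop :=
  v ∈ S ∧ w ∉ S ∧ ∀ a ∈ S, ∀ b ∉ S, (G.Adj a b ↔ a = v ∧ b = w)

namespace OneEdgeCut

variable {V : Type*} {G H : SimpleGraph V} {S S' : Set V} {v w v' w' : V}

lemma adj (h : OneEdgeCut G S v w) : G.Adj v w := (h.2.2 v h.1 w h.2.1).2 ⟨rfl, rfl⟩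

lemma compl (h : OneEdgeCut G S v w) : OneEdgeCut G Sᶜ w v := by
  refine ⟨h.2.1, fun hv => hv h.1, fun a ha b hb => ?_⟩
  rw [G.adj_comm, h.2.2 b (not_not.1 hb) a ha, and_comm]

/-- A walk of `G` that leaves `S` can only come back through `v`, so each side of the cut is
connected. -/
lemma induce_connected (h : OneEdgeCut G S v w) (hG : G.Connected) : (G.induce S).Connected := by
  rw [SimpleGraph.connected_iff_exists_forall_reachable]
  refine ⟨⟨v, h.1⟩, fun ⟨u, hu⟩ => ?_⟩
  by_contra hr
  obtain ⟨p⟩ := hG.preconnected v u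
  obtain ⟨d, -, h1, h2⟩ := p.exists_boundary_dart
    {x | ∀ hx : x ∈ S, (G.induce S).Reachable ⟨v, h.1⟩ ⟨x, hx⟩}
    (fun _ => SimpleGraph.Reachable.refl _) (fun h' => hr (h' hu))
  simp only [Set.mem_ofPred_eq, not_forall] at h1 h2
  obtain ⟨hd, h2⟩ := h2
  by_cases hf : d.fst ∈ S
  · exact h2 ((h1 hf).trans (SimpleGraph.Adj.reachable
      (show (G.induce S).Adj ⟨_, hf⟩ ⟨_, hd⟩ from d.adj)))
  · have := ((h.2.2 _ hd _ hf).1 d.adj.symm).1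
    apply h2
    have e : (⟨v, h.1⟩ : S) = ⟨d.snd, hd⟩ := Subtype.ext this.symm
    rw [e]

lemma induce_isTree (h : OneEdgeCut G S v w) (hG : G.IsTree) : (G.induce S).IsTree :=
  ⟨h.induce_connected hG.connected, hG.isAcyclic.induce S⟩

/-- A connected spanning subgraph must keep the only edge of the cut. -/
lemma of_le (h : OneEdgeCut G S v w) (hle : H ≤ G) (hH : H.Connected) : OneEdgeCut H S v w := by
  have hvw : H.Adj v w := by
    obtain ⟨p⟩ := hH.preconnected v w
    obtain ⟨d, -, h1, h2⟩ := p.exists_boundary_dart S h.1 h.2.1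
    obtain ⟨e1, e2⟩ := (h.2.2 _ h1 _ h2).1 (hle d.adj)
    rw [← e1, ← e2]
    exact d.adj
  refine ⟨h.1, h.2.1, fun a ha b hb => ⟨fun hab => (h.2.2 a ha b hb).1 (hle hab), ?_⟩⟩
  rintro ⟨rfl, rfl⟩
  exact hvw

lemma ext_graph (hG : OneEdgeCut G S v w) (hH : OneEdgeCut H S v w) (h1 : G.induce S = H.induce S)
    (h2 : G.induce Sᶜ = H.induce Sᶜ) : G = H := by
  ext a b
  by_cases ha : a ∈ S <;> by_cases hb : b ∈ S
  · have := congrArg (fun F => F.Adj ⟨a, ha⟩ ⟨b, hb⟩) h1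
    simpa using this
  · rw [hG.2.2 a ha b hb, hH.2.2 a ha b hb]
  · rw [G.adj_comm, H.adj_comm, hG.2.2 b hb a ha, hH.2.2 b hb a ha]
  · have := congrArg (fun F => F.Adj ⟨a, ha⟩ ⟨b, hb⟩) h2
    simpa using this

/-- Joining two trees by an edge gives a tree. Trees are treated as minimal connected graphs, so
that only connectivity has to be traced through the cut. -/
lemma isTree (h : OneEdgeCut G S v w) (h1 : (G.induce S).IsTree) (h2 : (G.induce Sᶜ).IsTree) :
    G.IsTree := by
  rw [SimpleGraph.isTree_iff_minimal_connected]
  have hr : ∀ x, G.Reachable v x := fun x => by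
    by_cases hx : x ∈ S
    · exact (h1.connected.preconnected ⟨v, h.1⟩ ⟨x, hx⟩).map
        (SimpleGraph.Embedding.induce (G := G) S).toHom
    · exact h.adj.reachable.trans ((h2.connected.preconnected ⟨w, h.2.1⟩ ⟨x, hx⟩).map
        (SimpleGraph.Embedding.induce (G := G) Sᶜ).toHom)
  refine ⟨(SimpleGraph.connected_iff_exists_forall_reachable G).2 ⟨v, hr⟩, fun H hH hle => ?_⟩
  have hPH := h.of_le hle hH
  rw [SimpleGraph.isTree_iff_minimal_connected] at h1 h2
  refine (hPH.ext_graph h ?_ ?_).ge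
  · exact (h1.eq_of_le (hPH.induce_connected hH) (fun _ _ hab => hle hab))
  · exact (h2.eq_of_le (hPH.compl.induce_connected hH) (fun _ _ hab => hle hab))

/-- The graph on `V` obtained from a graph on `S` and a graph on `Sᶜ` by adding the edge `vw`. -/
def glue (S : Set V) (v w : V) (G₁ : SimpleGraph S) (G₂ : SimpleGraph ↥Sᶜ) : SimpleGraph V :=
  G₁.map (Function.Embedding.subtype _) ⊔ G₂.map (Function.Embedding.subtype _) ⊔
    SimpleGraph.edge v w

lemma glue_adj (hv : v ∈ S) (hw : w ∉ S) (G₁ : SimpleGraph S) (G₂ : SimpleGraph ↥Sᶜ) (a b : V) :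
    (glue S v w G₁ G₂).Adj a b ↔ (∃ (ha : a ∈ S) (hb : b ∈ S), G₁.Adj ⟨a, ha⟩ ⟨b, hb⟩) ∨
      (∃ (ha : a ∉ S) (hb : b ∉ S), G₂.Adj ⟨a, ha⟩ ⟨b, hb⟩) ∨ (a = v ∧ b = w) ∨
      (a = w ∧ b = v) := by
  have hvw : v ≠ w := fun e => hw (e ▸ hv)
  simp only [glue, SimpleGraph.sup_adj, SimpleGraph.map_adj, SimpleGraph.edge_adj]
  constructor
  · rintro ((⟨x, y, h, rfl, rfl⟩ | ⟨x, y, h, rfl, rfl⟩) | h)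
    · exact Or.inl ⟨x.2, y.2, h⟩
    · exact Or.inr (Or.inl ⟨x.2, y.2, h⟩)
    · grind
  · rintro (⟨ha, hb, h⟩ | ⟨ha, hb, h⟩ | h)
    · exact Or.inl (Or.inl ⟨_, _, h, rfl, rfl⟩)
    · exact Or.inl (Or.inr ⟨_, _, h, rfl, rfl⟩)
    · right; grind

lemma glue_cut (hv : v ∈ S) (hw : w ∉ S) (G₁ : SimpleGraph S) (G₂ : SimpleGraph ↥Sᶜ) :
    OneEdgeCut (glue S v w G₁ G₂) S v w := by
  refine ⟨hv, hw, fun a ha b hb => ?_⟩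
  rw [glue_adj hv hw]
  grind

lemma glue_induce (hv : v ∈ S) (hw : w ∉ S) (G₁ : SimpleGraph S) (G₂ : SimpleGraph ↥Sᶜ) :
    (glue S v w G₁ G₂).induce S = G₁ := by
  ext ⟨a, ha⟩ ⟨b, hb⟩
  simp only [SimpleGraph.comap_adj, Function.Embedding.subtype_apply, glue_adj hv hw]
  grind

lemma glue_induce_compl (hv : v ∈ S) (hw : w ∉ S) (G₁ : SimpleGraph S) (G₂ : SimpleGraph ↥Sᶜ) :
    (glue S v w G₁ G₂).induce Sᶜ = G₂ := by
  ext ⟨a, ha⟩ ⟨b, hb⟩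
  simp only [SimpleGraph.comap_adj, Function.Embedding.subtype_apply, glue_adj hv hw]
  grind

/-- Since `S` is connected, if it meets both `S'` and the complement of `S'`, then some edge inside
`S` leaves `S'`. -/
lemma exists_cross (h : OneEdgeCut G S v w) (hG : G.Connected) {x u : V} (hx : x ∈ S) (hx' : x ∈ S')
    (hu : u ∈ S) (hu' : u ∉ S') : ∃ a ∈ S, ∃ b ∈ S, a ∈ S' ∧ b ∉ S' ∧ G.Adj a b := by
  obtain ⟨p⟩ := (h.induce_connected hG).preconnected ⟨x, hx⟩ ⟨u, hu⟩
  obtain ⟨d, -, h1, h2⟩ := p.exists_boundary_dart (Subtype.val ⁻¹' S') hx' hu'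
  exact ⟨d.fst, d.fst.2, d.snd, d.snd.2, h1, h2, d.adj⟩

lemma subset (h : OneEdgeCut G S v w) (h' : OneEdgeCut G S' v w) (hG : G.Connected) : S ⊆ S' := by
  intro u hu
  by_contra hu'
  obtain ⟨a, ha, b, hb, ha', hb', hab⟩ := h.exists_cross hG h.1 h'.1 hu hu'
  exact h.2.1 (((h'.2.2 a ha' b hb').1 hab).2 ▸ hb)

lemma side_unique (h : OneEdgeCut G S v w) (h' : OneEdgeCut G S' v w) (hG : G.Connected) : S = S' :=
  (h.subset h' hG).antisymm (h'.subset h hG)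

/-- Every edge of a tree is the only edge of the cut around one of its two components. -/
lemma of_adj (hG : G.IsTree) (hvw : G.Adj v w) :
    OneEdgeCut G {u | (G.deleteEdges {s(v, w)}).Reachable v u} v w := by
  have hb := (SimpleGraph.isAcyclic_iff_forall_adj_isBridge.1 hG.isAcyclic) hvw
  rw [SimpleGraph.isBridge_iff] at hb
  refine ⟨SimpleGraph.Reachable.refl _, hb, fun a ha b hnb => ⟨fun hab => ?_, ?_⟩⟩
  · by_contra hne
    apply hnb
    refine SimpleGraph.Reachable.trans ha (SimpleGraph.Adj.reachable ?_)
    rw [SimpleGraph.deleteEdges_adj]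
    refine ⟨hab, fun he => ?_⟩
    rw [Set.mem_singleton_iff, Sym2.eq_iff] at he
    rcases he with he | ⟨rfl, rfl⟩
    · exact hne he
    · exact hb ha
  · rintro ⟨rfl, rfl⟩
    exact hvw

/-- If two one-edge cuts at the same vertex `v` do not cover the vertex set, then they coincide:
an edge leaving `S ∪ S'` has to be both `vw` and `vw'`. -/
lemma eq_of_union_ne (h : OneEdgeCut G S v w) (h' : OneEdgeCut G S' v w') (hG : G.Connected) {z : V}
    (hz : z ∉ S ∪ S') : w = w' ∧ S = S' := by
  have hw : w = w' := by
    obtain ⟨p⟩ := hG.preconnected v z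
    obtain ⟨d, -, h1, h2⟩ := p.exists_boundary_dart (S ∪ S') (Or.inl h.1) hz
    simp only [Set.mem_union, not_or] at h1 h2
    rcases h1 with h1 | h1
    · obtain ⟨e1, e2⟩ := (h.2.2 _ h1 _ h2.1).1 d.adj
      exact ((h'.2.2 v h'.1 w (e2 ▸ h2.2)).1 h.adj).2
    · obtain ⟨e1, e2⟩ := (h'.2.2 _ h1 _ h2.2).1 d.adj
      exact ((h.2.2 v h.1 w' (e2 ▸ h2.1)).1 h'.adj).2.symm
  subst hw
  have hside := h.side_unique h' hG
  exact ⟨rfl, hside⟩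

/-- Of two intersecting sides, one contains the root of the other. -/
lemma mem_or_mem (h : OneEdgeCut G S v w) (h' : OneEdgeCut G S' v' w') (hG : G.Connected)
    (hd : ¬ Disjoint S S') : v ∈ S' ∨ v' ∈ S := by
  obtain ⟨x, hx, hx'⟩ := Set.not_disjoint_iff.1 hd
  by_contra! hc
  obtain ⟨a, ha, b, hb, ha', hb', hab⟩ := h.exists_cross hG hx hx' h.1 hc.1
  exact hc.2 (((h'.2.2 a ha' b hb').1 hab).1 ▸ ha)

/-- If two disjoint sides do not cover the vertex set, the cut edge of `S'` does not end in `S`;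
otherwise both cut edges would agree and nothing would leave `S ∪ S'`. -/
lemma notMem_of_disjoint (h : OneEdgeCut G S v w) (h' : OneEdgeCut G S' v' w') (hG : G.Connected)
    (hd : Disjoint S S') {z : V} (hz : z ∉ S ∪ S') : w' ∉ S := by
  intro hw'
  have hv' : v' ∉ S := fun hv => Set.disjoint_left.1 hd hv h'.1
  obtain ⟨rfl, rfl⟩ := (h.2.2 w' hw' v' hv').1 h'.adj.symm
  obtain ⟨p⟩ := hG.preconnected w' z
  obtain ⟨d, -, h1, h2⟩ := p.exists_boundary_dart (S ∪ S') (Or.inl hw') hz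
  simp only [Set.mem_union, not_or] at h1 h2
  rcases h1 with h1 | h1
  · obtain ⟨e1, e2⟩ := (h.2.2 _ h1 _ h2.1).1 d.adj
    exact h2.2 (e2 ▸ h'.1)
  · obtain ⟨e1, e2⟩ := (h'.2.2 _ h1 _ h2.2).1 d.adj
    exact h2.1 (e2 ▸ hw')

end OneEdgeCut

/-! ### Counting trees together with one-edge cuts -/

section Counting

variable (V : Type*) [Fintype V]

/-- The finite set of trees with vertex set `V`. -/
noncomputable def trees : Finset (SimpleGraph V) := Finset.univ.filter fun G => G.IsTree

/-- The number of labelled trees on `n` vertices. -/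
noncomputable def treeCount (n : ℕ) : ℕ := (trees (Fin n)).card

variable {V}

lemma mem_trees {G : SimpleGraph V} : G ∈ trees V ↔ G.IsTree := by simp [trees]

lemma card_trees : (trees V).card = treeCount (Fintype.card V) := by
  refine Finset.card_equiv (Fintype.equivFin V).simpleGraph fun G => ?_
  rw [mem_trees, mem_trees]
  exact (SimpleGraph.Iso.isTree_iff (SimpleGraph.Iso.comap (Fintype.equivFin V).symm G)).symm

lemma card_coe_compl (S : Finset V) :
    Fintype.card ↥((S : Set V)ᶜ) = Fintype.card V - S.card := by
  rw [← Nat.card_eq_fintype_card, Nat.card_coe_set_eq, Set.ncard_compl, Set.ncard_coe_finset,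
    Nat.card_eq_fintype_card]

/-- Trees in which `vw` is the only edge leaving `S` correspond to pairs of a tree on `S` and a tree
on `Sᶜ`; this is the resulting formula for summing over them a function of the part on `Sᶜ`. -/
lemma sum_trees_cut (S : Finset V) {v w : V} (hv : v ∈ S) (hw : w ∉ S)
    (f : SimpleGraph ↥((S : Set V)ᶜ) → ℕ) :
    ∑ G ∈ (trees V).filter (fun G => OneEdgeCut G S v w), f (G.induce (S : Set V)ᶜ) =
      treeCount S.card * ∑ H ∈ trees ↥((S : Set V)ᶜ), f H := by
  have hv' : v ∈ (S : Set V) := hv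
  have hw' : w ∉ (S : Set V) := hw
  have e : treeCount S.card = (trees (S : Set V)).card := by
    rw [card_trees]; simp
  rw [e, ← smul_eq_mul, ← Finset.sum_const, ← Finset.sum_product']
  refine Finset.sum_bij' (fun G _ => (G.induce (S : Set V), G.induce (S : Set V)ᶜ))
    (fun p _ => OneEdgeCut.glue S v w p.1 p.2) ?_ ?_ ?_ ?_ ?_
  · intro G hG
    rw [Finset.mem_filter, mem_trees] at hG
    rw [Finset.mem_product, mem_trees, mem_trees]
    exact ⟨hG.2.induce_isTree hG.1, hG.2.compl.induce_isTree hG.1⟩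
  · intro p hp
    rw [Finset.mem_product, mem_trees, mem_trees] at hp
    rw [Finset.mem_filter, mem_trees]
    have hg := OneEdgeCut.glue_cut hv' hw' p.1 p.2
    refine ⟨hg.isTree ?_ ?_, hg⟩
    · rw [OneEdgeCut.glue_induce hv' hw']; exact hp.1
    · rw [OneEdgeCut.glue_induce_compl hv' hw']; exact hp.2
  · intro G hG
    rw [Finset.mem_filter] at hG
    exact (OneEdgeCut.glue_cut hv' hw' _ _).ext_graph hG.2 (OneEdgeCut.glue_induce hv' hw' _ _)
      (OneEdgeCut.glue_induce_compl hv' hw' _ _)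
  · intro p _
    exact Prod.ext (OneEdgeCut.glue_induce hv' hw' _ _) (OneEdgeCut.glue_induce_compl hv' hw' _ _)
  · intro G _
    rfl

/-- The one-edge cuts of `G` with a side of at most `K` vertices, as triples `(S, v, w)` with `vw`
the cut edge and `v` in the small side `S`. -/
noncomputable def cuts (K : ℕ) (G : SimpleGraph V) : Finset (Finset V × V × V) :=
  Finset.univ.filter fun τ => τ.1.card ≤ K ∧ OneEdgeCut G τ.1 τ.2.1 τ.2.2

lemma mem_cuts {K : ℕ} {G : SimpleGraph V} {τ : Finset V × V × V} :
    τ ∈ cuts K G ↔ τ.1.card ≤ K ∧ OneEdgeCut G τ.1 τ.2.1 τ.2.2 := by simp [cuts]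

/-- Double counting of pairs of a tree and a small cut, weighted by a function of the cut and of the
part of the tree outside the small side. -/
lemma sum_cuts (K : ℕ) (F : ∀ S : Finset V, SimpleGraph ↥((S : Set V)ᶜ) → ℕ) :
    ∑ G ∈ trees V, ∑ τ ∈ cuts K G, F τ.1 (G.induce (τ.1 : Set V)ᶜ) =
      ∑ S : Finset V with S.card ≤ K, S.card * (Fintype.card V - S.card) *
        (treeCount S.card * ∑ H ∈ trees ↥((S : Set V)ᶜ), F S H) := by
  have h1 : ∀ G ∈ trees V, ∑ τ ∈ cuts K G, F τ.1 (G.induce (τ.1 : Set V)ᶜ) =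
      ∑ S : Finset V with S.card ≤ K, ∑ q ∈ S ×ˢ Sᶜ,
        if OneEdgeCut G S q.1 q.2 then F S (G.induce (S : Set V)ᶜ) else 0 := by
    intro G _
    rw [Finset.sum_sigma', ← Finset.sum_filter]
    refine Finset.sum_bij' (fun τ _ => ⟨τ.1, τ.2⟩) (fun s _ => (s.1, s.2)) ?_ ?_ ?_ ?_ ?_
    · intro τ hτ
      rw [mem_cuts] at hτ
      have h1 := hτ.2.1
      have h2 := hτ.2.2.1
      simp only [Finset.mem_coe] at h1 h2
      simp [hτ, h1, h2]
    · intro s hs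
      simp only [Finset.mem_filter, Finset.mem_sigma] at hs
      exact mem_cuts.2 ⟨hs.1.1.2, hs.2⟩
    · intro τ _; rfl
    · intro s _; rfl
    · intro τ _; rfl
  rw [Finset.sum_congr rfl h1, Finset.sum_comm]
  refine Finset.sum_congr rfl fun S _ => ?_
  rw [Finset.sum_comm]
  have h2 : ∀ q ∈ S ×ˢ Sᶜ, ∑ G ∈ trees V,
      (if OneEdgeCut G S q.1 q.2 then F S (G.induce (S : Set V)ᶜ) else 0) =
      treeCount S.card * ∑ H ∈ trees ↥((S : Set V)ᶜ), F S H := by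
    intro q hq
    rw [Finset.mem_product, Finset.mem_compl] at hq
    rw [← Finset.sum_filter]
    exact sum_trees_cut S hq.1 hq.2 (F S)
  rw [Finset.sum_congr rfl h2, Finset.sum_const, Finset.card_product, Finset.card_compl,
    smul_eq_mul]

lemma sum_small (K : ℕ) (hK : K ≤ Fintype.card V) (g : ℕ → ℕ) :
    ∑ S : Finset V with S.card ≤ K, g S.card =
      ∑ k ∈ Finset.range (K + 1), (Fintype.card V).choose k * g k := by
  rw [Finset.sum_filter, ← Finset.powerset_univ,
    Finset.sum_powerset_apply_card (fun m => if m ≤ K then g m else 0), Finset.card_univ]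
  simp only [smul_eq_mul, mul_ite, mul_zero]
  rw [← Finset.sum_filter]
  refine Finset.sum_congr ?_ fun _ _ => rfl
  ext m
  simp only [Finset.mem_filter, Finset.mem_range]
  omega

/-- The number of pairs of a tree on `n` vertices and a one-edge cut `(S, v, w)` of it with
`|S| = k`. -/
noncomputable def cutCount (n k : ℕ) : ℕ :=
  n.choose k * (k * (n - k) * (treeCount k * treeCount (n - k)))

lemma sum_card_cuts (K : ℕ) (hK : K ≤ Fintype.card V) :
    ∑ G ∈ trees V, (cuts K G).card = ∑ k ∈ Finset.range (K + 1), cutCount (Fintype.card V) k := by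
  have := sum_cuts (V := V) K (fun _ _ => 1)
  simp only [Finset.sum_const, smul_eq_mul, mul_one, card_trees, card_coe_compl] at this
  rw [this]
  exact sum_small K hK fun k => k * (Fintype.card V - k) *
    (treeCount k * treeCount (Fintype.card V - k))

lemma exists_notMem_union {K : ℕ} (hK : 2 * K < Fintype.card V) {S S' : Finset V}
    (h : S.card ≤ K) (h' : S'.card ≤ K) : ∃ z, z ∉ (S : Set V) ∪ S' := by
  by_contra! hc
  have : (S ∪ S') = Finset.univ := by
    ext x; simpa using hc x
  have h1 := Finset.card_union_le S S'
  rw [this, Finset.card_univ] at h1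
  omega

/-- In a graph with more than `2 * K` vertices, a small cut is determined by its root. -/
lemma cuts_injOn {K : ℕ} (hK : 2 * K < Fintype.card V) {G : SimpleGraph V} (hG : G.Connected) :
    Set.InjOn (fun τ : Finset V × V × V => τ.2.1) (cuts K G : Set (Finset V × V × V)) := by
  rintro ⟨S, v, w⟩ h ⟨S', v', w'⟩ h' (rfl : v = v')
  rw [Finset.mem_coe, mem_cuts] at h h'
  obtain ⟨z, hz⟩ := exists_notMem_union hK h.1 h'.1
  obtain ⟨rfl, hS⟩ := h.2.eq_of_union_ne h'.2 hG hz
  have : S = S' := Finset.coe_injective hS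
  rw [this]

lemma card_cuts_le {K : ℕ} (hK : 2 * K < Fintype.card V) {G : SimpleGraph V} (hG : G.Connected) :
    (cuts K G).card ≤ Fintype.card V := by
  rw [← Finset.card_univ]
  exact Finset.card_le_card_of_injOn _ (fun _ _ => Finset.mem_coe.2 (Finset.mem_univ _))
    (cuts_injOn hK hG)

/-- The small cuts with side disjoint from that of `τ` survive as cuts of the graph outside `τ`. -/
lemma card_cuts_disjoint_le {K : ℕ} (hK : 2 * K < Fintype.card V) {G : SimpleGraph V}
    (hG : G.Connected) {τ : Finset V × V × V} (hτ : τ ∈ cuts K G) :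
    ((cuts K G).filter fun τ' => Disjoint τ.1 τ'.1).card ≤
      (cuts K (G.induce (τ.1 : Set V)ᶜ)).card := by
  refine Finset.card_le_card_of_surjOn
    (fun σ => (σ.1.map (Function.Embedding.subtype _), σ.2.1.1, σ.2.2.1)) ?_
  rintro ⟨S', v', w'⟩ h
  rw [Finset.mem_coe, Finset.mem_filter, mem_cuts] at h
  obtain ⟨⟨hc, hP⟩, hd⟩ := h
  rw [mem_cuts] at hτ
  simp only at hc hP hd
  obtain ⟨z, hz⟩ := exists_notMem_union hK hτ.1 hc
  have hd' : Disjoint (τ.1 : Set V) S' := Finset.disjoint_coe.2 hd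
  have hw := hτ.2.notMem_of_disjoint hP hG hd' hz
  have hv : v' ∉ (τ.1 : Set V) := fun hv => Set.disjoint_left.1 hd' hv hP.1
  have hS : (S'.subtype (· ∈ (τ.1 : Set V)ᶜ)).map (Function.Embedding.subtype _) = S' :=
    Finset.subtype_map_of_mem fun x hx hx' => Set.disjoint_left.1 hd' hx' hx
  refine ⟨(S'.subtype (· ∈ (τ.1 : Set V)ᶜ), ⟨v', hv⟩, ⟨w', hw⟩), ?_, ?_⟩
  · rw [Finset.mem_coe, mem_cuts]
    refine ⟨?_, ?_, ?_, ?_⟩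
    · rw [← Finset.card_map (Function.Embedding.subtype _), hS]; exact hc
    · simpa using hP.1
    · simpa using hP.2.1
    · rintro ⟨a, ha⟩ ha' ⟨b, hb⟩ hb'
      simp only [Finset.mem_coe, Finset.mem_subtype] at ha' hb'
      simpa using hP.2.2 a ha' b hb'
  · simp only [hS]

/-- There are only linearly many pairs of small cuts for which the side of one contains the root of
the other. -/
lemma card_nested_le {K : ℕ} (hK : 2 * K < Fintype.card V) {G : SimpleGraph V}
    (hG : G.Connected) :
    ∑ τ' ∈ cuts K G, ((cuts K G).filter fun τ => τ.2.1 ∈ τ'.1).card ≤ K * Fintype.card V := by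
  calc _ ≤ ∑ τ' ∈ cuts K G, K := by
        refine Finset.sum_le_sum fun τ' hτ' => le_trans ?_ (mem_cuts.1 hτ').1
        refine Finset.card_le_card_of_injOn (fun τ => τ.2.1) ?_
          ((cuts_injOn hK hG).mono ?_)
        · intro τ hτ
          exact (Finset.mem_filter.1 hτ).2
        · intro τ hτ
          exact (Finset.mem_filter.1 hτ).1
    _ ≤ K * Fintype.card V := by
        rw [Finset.sum_const, smul_eq_mul, mul_comm]
        exact Nat.mul_le_mul_left _ (card_cuts_le hK hG)

lemma card_cuts_sq_le {K : ℕ} (hK : 2 * K < Fintype.card V) {G : SimpleGraph V}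
    (hG : G.Connected) :
    (cuts K G).card ^ 2 ≤ ∑ τ ∈ cuts K G, (cuts K (G.induce (τ.1 : Set V)ᶜ)).card +
      2 * K * Fintype.card V := by
  have h1 : ∀ τ ∈ cuts K G, (cuts K G).card ≤
      (cuts K (G.induce (τ.1 : Set V)ᶜ)).card +
      (((cuts K G).filter fun τ' => τ'.2.1 ∈ τ.1).card +
      ((cuts K G).filter fun τ' => τ.2.1 ∈ τ'.1).card) := by
    intro τ hτ
    have hsub : cuts K G ⊆ ((cuts K G).filter fun τ' => Disjoint τ.1 τ'.1) ∪
        (((cuts K G).filter fun τ' => τ'.2.1 ∈ τ.1) ∪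
        ((cuts K G).filter fun τ' => τ.2.1 ∈ τ'.1)) := by
      intro τ' hτ'
      simp only [Finset.mem_union, Finset.mem_filter, hτ', true_and]
      by_cases hd : Disjoint τ.1 τ'.1
      · exact Or.inl hd
      · right
        have := (mem_cuts.1 hτ).2.mem_or_mem (mem_cuts.1 hτ').2 hG
          (fun h => hd (Finset.disjoint_coe.1 h))
        exact this.symm
    refine (Finset.card_le_card hsub).trans ((Finset.card_union_le _ _).trans ?_)
    exact add_le_add (card_cuts_disjoint_le hK hG hτ) (Finset.card_union_le _ _)
  have h2 := Finset.sum_le_sum h1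
  rw [Finset.sum_const, smul_eq_mul, ← sq, Finset.sum_add_distrib, Finset.sum_add_distrib] at h2
  have h3 := card_nested_le hK hG
  have h4 : ∑ τ ∈ cuts K G, ((cuts K G).filter fun τ' => τ.2.1 ∈ τ'.1).card =
      ∑ τ' ∈ cuts K G, ((cuts K G).filter fun τ => τ.2.1 ∈ τ'.1).card := by
    simp only [Finset.card_filter]
    rw [Finset.sum_comm]
  rw [h4] at h2
  linarith

/-- Second moment bound: pairs of cuts with disjoint sides are counted by removing the first side,
all other pairs contribute the linear error term. -/
lemma sum_card_cuts_sq_le {K : ℕ} (hK : 2 * K < Fintype.card V) :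
    ∑ G ∈ trees V, (cuts K G).card ^ 2 ≤
      ∑ k ∈ Finset.range (K + 1), (Fintype.card V).choose k * (k * (Fintype.card V - k) *
        (treeCount k * ∑ l ∈ Finset.range (K + 1), cutCount (Fintype.card V - k) l)) +
      treeCount (Fintype.card V) * (2 * K * Fintype.card V) := by
  refine (Finset.sum_le_sum fun G hG => card_cuts_sq_le hK (mem_trees.1 hG).connected).trans ?_
  rw [Finset.sum_add_distrib, Finset.sum_const, card_trees, smul_eq_mul,
    sum_cuts K (fun S H => (cuts K H).card)]
  refine Nat.add_le_add_right (le_of_eq ?_) _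
  rw [← sum_small K (by omega) (fun k => k * (Fintype.card V - k) *
        (treeCount k * ∑ l ∈ Finset.range (K + 1), cutCount (Fintype.card V - k) l))]
  refine Finset.sum_congr rfl fun S hS => ?_
  have hS' : S.card ≤ K := (Finset.mem_filter.1 hS).2
  rw [sum_card_cuts K (by rw [card_coe_compl]; omega), card_coe_compl]

/-- With no bound on the side, the one-edge cuts of a tree are its edges with an orientation. -/
lemma card_cuts_all {G : SimpleGraph V} (hG : G.IsTree) :
    (cuts (Fintype.card V) G).card = 2 * (Fintype.card V - 1) := by
  have h1 : (cuts (Fintype.card V) G).card =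
      (Finset.univ.filter fun q : V × V => G.Adj q.1 q.2).card := by
    refine Finset.card_bij (fun τ _ => τ.2) ?_ ?_ ?_
    · intro τ hτ
      simpa using (mem_cuts.1 hτ).2.adj
    · rintro ⟨S, q⟩ h ⟨S', q'⟩ h' (rfl : q = q')
      have := (mem_cuts.1 h).2.side_unique (mem_cuts.1 h').2 hG.connected
      exact Prod.ext (Finset.coe_injective this) rfl
    · intro q hq
      have hp := OneEdgeCut.of_adj hG (Finset.mem_filter.1 hq).2
      refine ⟨(Set.toFinset {u | (G.deleteEdges {s(q.1, q.2)}).Reachable q.1 u}, q),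
        mem_cuts.2 ⟨Finset.card_le_univ _, ?_⟩, rfl⟩
      rw [Set.coe_toFinset]
      exact hp
  have h2 : (Finset.univ.filter fun q : V × V => G.Adj q.1 q.2).card = ∑ v, G.degree v := by
    rw [Finset.card_filter, ← Finset.univ_product_univ, Finset.sum_product]
    refine Finset.sum_congr rfl fun v _ => ?_
    rw [← Finset.card_filter, ← SimpleGraph.card_neighborFinset_eq_degree]
    congr 1
    ext x; simp
  rw [h1, h2, G.sum_degrees_eq_twice_card_edges]
  have := hG.card_edgeFinset
  omega

lemma treeCount_rec (n : ℕ) :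
    treeCount n * (2 * (n - 1)) = ∑ k ∈ Finset.range (n + 1), cutCount n k := by
  have h := sum_card_cuts (V := Fin n) n (by simp)
  rw [Fintype.card_fin] at h
  rw [← h, Finset.sum_congr rfl fun G hG => by
    simpa using card_cuts_all (V := Fin n) (mem_trees.1 hG)]
  rw [Finset.sum_const, smul_eq_mul, treeCount]

end Counting

/-! ### Abel's identity and Cayley's formula -/

section Cayley

/-- The `(n + 2)`-nd finite difference of `x ↦ x ^ (n + 1)` at `0` vanishes. -/
lemma alternating_sum_pow (n : ℕ) :
    ∑ k ∈ Finset.range (n + 2), ((n + 2).choose (k + 1) : ℝ) * (k + 1) ^ k *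
      (-((k : ℝ) + 1)) ^ (n + 1 - k) = 0 := by
  have h := congrFun (fwdDiff_iter_pow_eq_zero_of_lt (R := ℝ) (show n + 1 < n + 2 by omega)) 0
  rw [fwdDiff_iter_eq_sum_shift, Finset.sum_range_succ'] at h
  simp only [Pi.zero_apply, zero_add, zero_smul, ne_eq, Nat.succ_ne_zero, not_false_eq_true,
    zero_pow, smul_zero, add_zero] at h
  rw [← h]
  refine Finset.sum_congr rfl fun k hk => ?_
  have hk' : k ≤ n + 1 := by have := Finset.mem_range.1 hk; omega
  have e : n + 2 - (k + 1) = n + 1 - k := by omega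
  have e2 : ((k : ℝ) + 1) ^ (n + 1) = (k + 1) ^ k * (k + 1) ^ (n + 1 - k) := by
    rw [← pow_add]; congr 1; omega
  rw [neg_pow, e, zsmul_eq_mul, nsmul_eq_mul]
  push_cast
  rw [mul_one, e2]
  ring

/-- A case of Abel's binomial identity. By induction both sides have the same derivative in `y`, and
at `y = -(n + 1)` both vanish, the left one (for `n ≥ 1`) as an iterated finite difference. -/
lemma abel_identity (n : ℕ) : ∀ y : ℝ,
    ∑ k ∈ Finset.range (n + 1), ((n + 1).choose (k + 1) : ℝ) * (k + 1) ^ k *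
      (y + (n - k)) ^ (n - k) = (n + 1) * (y + n + 1) ^ n := by
  induction n with
  | zero => intro y; simp
  | succ n ih =>
    set f : ℝ → ℝ := fun y => ∑ k ∈ Finset.range (n + 1 + 1),
      ((n + 1 + 1).choose (k + 1) : ℝ) * (k + 1) ^ k *
      (y + ((n + 1 : ℕ) - k)) ^ (n + 1 - k) - ((n + 1 : ℕ) + 1) * (y + (n + 1 : ℕ) + 1) ^ (n + 1)
      with hf
    have hd : ∀ y, HasDerivAt f 0 y := by
      intro y
      have h1 : HasDerivAt f (∑ k ∈ Finset.range (n + 1 + 1),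
          ((n + 1 + 1).choose (k + 1) : ℝ) * (k + 1) ^ k *
          (((n + 1 - k : ℕ) : ℝ) * (y + ((n + 1 : ℕ) - k)) ^ (n + 1 - k - 1) * 1) -
          ((n + 1 : ℕ) + 1) * (((n + 1 : ℕ) : ℝ) * (y + (n + 1 : ℕ) + 1) ^ (n + 1 - 1) * 1)) y := by
        refine HasDerivAt.sub (HasDerivAt.fun_sum fun k _ => ?_) ?_
        · exact (((hasDerivAt_id y).add_const _).pow _).const_mul _
        · exact ((((hasDerivAt_id y).add_const _).add_const _).pow _).const_mul _
      convert h1 using 1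
      rw [Finset.sum_range_succ, eq_comm, sub_eq_zero]
      simp only [Nat.sub_self, Nat.cast_zero, zero_mul, mul_zero, add_zero, mul_one]
      have h2 := ih (y + 1)
      have h3 : ((n : ℝ) + 2) * ∑ k ∈ Finset.range (n + 1), ((n + 1).choose (k + 1) : ℝ) *
          (k + 1) ^ k * (y + 1 + (n - k)) ^ (n - k) =
          (n + 2) * ((n + 1) * (y + 1 + n + 1) ^ n) := by rw [h2]
      rw [Finset.mul_sum] at h3
      have h4 : ((n + 1 : ℕ) + 1 : ℝ) * (((n + 1 : ℕ) : ℝ) * (y + (n + 1 : ℕ) + 1) ^ (n + 1 - 1)) =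
          (n + 2) * ((n + 1) * (y + 1 + n + 1) ^ n) := by
        rw [Nat.add_sub_cancel]; push_cast; ring
      rw [h4, ← h3]
      refine Finset.sum_congr rfl fun k hk => ?_
      have hk' : k ≤ n := by have := Finset.mem_range.1 hk; omega
      have hch : ((n + 1 + 1).choose (k + 1) : ℝ) * ((n + 1 - k : ℕ) : ℝ) =
          (n + 2) * ((n + 1).choose (k + 1) : ℝ) := by
        have := Nat.choose_mul_succ_eq (n + 1) (k + 1)
        have e : n + 1 + 1 - (k + 1) = n + 1 - k := by omega
        rw [e] at this
        have h5 : (((n + 1).choose (k + 1) * (n + 1 + 1) : ℕ) : ℝ) =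
          ((n + 1 + 1).choose (k + 1) * (n + 1 - k) : ℕ) := by rw [this]
        rw [Nat.cast_mul, Nat.cast_mul] at h5
        rw [← h5]; push_cast; ring
      have e : n + 1 - k - 1 = n - k := by omega
      have e2 : y + (((n + 1 : ℕ) : ℝ) - k) = y + 1 + (n - k) := by push_cast; ring
      rw [e, e2]
      linear_combination ((k + 1 : ℝ) ^ k * (y + 1 + (n - k)) ^ (n - k)) * hch
    intro y
    have hc := is_const_of_deriv_eq_zero (fun y => (hd y).differentiableAt)
      (fun y => (hd y).deriv) y (-(n + 2 : ℝ))
    have h0 : f (-(n + 2 : ℝ)) = 0 := by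
      rw [hf]
      have e1 : (-(n + 2 : ℝ) + (n + 1 : ℕ) + 1) = 0 := by push_cast; ring
      simp only [e1]
      rw [zero_pow (by omega), mul_zero, sub_zero, ← alternating_sum_pow n]
      refine Finset.sum_congr rfl fun k _ => ?_
      congr 2
      push_cast; ring
    rw [h0] at hc
    exact sub_eq_zero.1 hc

lemma treeCount_one : treeCount 1 = 1 := by
  have : trees (Fin 1) = {⊥} := by
    ext G
    rw [mem_trees, Finset.mem_singleton]
    exact ⟨fun _ => Subsingleton.elim _ _, fun _ => SimpleGraph.IsTree.of_subsingleton⟩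
  rw [treeCount, this, Finset.card_singleton]

lemma mul_pow_sub_two {k : ℕ} (hk : 1 ≤ k) : k * k ^ (k - 2) = k ^ (k - 1) := by
  obtain rfl | h := hk.eq_or_lt
  · rfl
  · rw [← pow_succ']; congr 1; omega

/-- Cayley's formula, by strong induction: `treeCount_rec` expresses `treeCount n` through smaller
values, and Abel's identity evaluates the resulting sum. -/
theorem treeCount_eq : ∀ n : ℕ, 1 ≤ n → treeCount n = n ^ (n - 2) := by
  intro n
  induction n using Nat.strong_induction_on with
  | _ n ih =>
  intro hn
  obtain rfl | hn2 := hn.eq_or_lt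
  · rw [treeCount_one]; rfl
  obtain ⟨m, rfl⟩ : ∃ m, n = m + 2 := ⟨n - 2, by omega⟩
  have hrec := treeCount_rec (m + 2)
  rw [Finset.sum_range_succ, Finset.sum_range_succ'] at hrec
  have z0 : cutCount (m + 2) 0 = 0 := by simp [cutCount]
  have z1 : cutCount (m + 2) (m + 2) = 0 := by simp [cutCount]
  rw [z0, z1, add_zero, add_zero] at hrec
  set b : ℕ → ℕ := fun j => (m + 2).choose (j + 1) * (j + 1) ^ j * (m + 1 - j) ^ (m + 1 - j)
    with hb
  -- The factor `n = k + (n - k)` splits each term into a summand of Abel's sum and its reflection.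
  have hterm : ∀ j ∈ Finset.range (m + 1), (m + 2) * cutCount (m + 2) (j + 1) =
      b j + b (m + 1 - 1 - j) := by
    intro j hj
    have hj' : j ≤ m := by have := Finset.mem_range.1 hj; omega
    obtain ⟨i, rfl⟩ : ∃ i, m = j + i := ⟨m - j, by omega⟩
    have e1 : j + i + 2 - (j + 1) = i + 1 := by omega
    have e2 : j + i + 1 - 1 - j = i := by omega
    have e3 : j + i + 1 - j = i + 1 := by omega
    have e4 : j + i + 1 - i = j + 1 := by omega
    have e5 : (j + i + 2).choose (i + 1) = (j + i + 2).choose (j + 1) := by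
      rw [← Nat.choose_symm_of_eq_add]; omega
    have f1 := mul_pow_sub_two (k := j + 1) (by omega)
    have f2 := mul_pow_sub_two (k := i + 1) (by omega)
    simp only [hb, cutCount, e1, e2, e3, e4, e5]
    rw [ih (j + 1) (by omega) (by omega), ih (i + 1) (by omega) (by omega)]
    have : (j + 1) * (i + 1) * ((j + 1) ^ (j + 1 - 2) * (i + 1) ^ (i + 1 - 2)) =
        (j + 1) ^ j * (i + 1) ^ i := by
      calc _ = ((j + 1) * (j + 1) ^ (j + 1 - 2)) * ((i + 1) * (i + 1) ^ (i + 1 - 2)) := by ring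
        _ = _ := by rw [f1, f2]; rfl
    rw [this]
    ring
  have hsum : (m + 2) * (treeCount (m + 2) * (2 * (m + 2 - 1))) =
      2 * ∑ j ∈ Finset.range (m + 1), b j := by
    rw [hrec, Finset.mul_sum, Finset.sum_congr rfl hterm, Finset.sum_add_distrib,
      Finset.sum_range_reflect b (m + 1), two_mul]
  have habel : ∑ j ∈ Finset.range (m + 1), b j + (m + 2) ^ (m + 1) =
      (m + 2) * (m + 2) ^ (m + 1) := by
    have h := abel_identity (m + 1) 0
    rw [Finset.sum_range_succ] at h
    have h' : ((∑ j ∈ Finset.range (m + 1), b j + (m + 2) ^ (m + 1) : ℕ) : ℝ) =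
        ((m + 2) * (m + 2) ^ (m + 1) : ℕ) := by
      have hl : ((m : ℝ) + 1 + 1) = m + 2 := by ring
      push_cast at h ⊢
      simp only [zero_add, sub_self, Nat.sub_self, pow_zero, mul_one, Nat.choose_self,
        Nat.cast_one, one_mul, hl] at h
      rw [← h]
      congr 1
      refine Finset.sum_congr rfl fun j hj => ?_
      have hj' : j ≤ m + 1 := by have := Finset.mem_range.1 hj; omega
      simp only [hb]
      push_cast [Nat.cast_sub hj']
      ring
    exact_mod_cast h'
  have hfin : (2 * (m + 1) * (m + 2)) * treeCount (m + 2) =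
      (2 * (m + 1) * (m + 2)) * (m + 2) ^ m := by
    have e : m + 2 - 1 = m + 1 := by omega
    rw [e] at hsum
    have : (m + 2) ^ (m + 1) = (m + 2) * (m + 2) ^ m := by rw [pow_succ']
    rw [this] at habel
    nlinarith
  exact Nat.eq_of_mul_eq_mul_left (by positivity) hfin

end Cayley

/-! ### Moments of the number of small cuts -/

section Asymptotics

/-- The expected number of one-edge cuts with side of size `k` in a random tree on `n` vertices,
divided by `n`. -/
noncomputable def cutShare (n k : ℕ) : ℝ := cutCount n k / (treeCount n * n)

lemma cutCount_zero (n : ℕ) : cutCount n 0 = 0 := by simp [cutCount]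

lemma sum_range_eq_Icc (K : ℕ) (f : ℕ → ℕ) (h0 : f 0 = 0) :
    ∑ k ∈ Finset.range (K + 1), f k = ∑ k ∈ Finset.Icc 1 K, f k := by
  symm
  refine Finset.sum_subset (fun k hk => ?_) fun k hk hk' => ?_
  · simp only [Finset.mem_Icc, Finset.mem_range] at *; omega
  · simp only [Finset.mem_Icc, Finset.mem_range] at *
    have : k = 0 := by omega
    rw [this, h0]

lemma treeCount_pos {n : ℕ} (hn : 1 ≤ n) : 0 < treeCount n := by
  rw [treeCount_eq n hn]; positivity

/-- By Cayley's formula the share of cuts of size `k` is a binomial probability with parameters `n`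
and `k / n`, up to a factor that tends to `1 / k`. -/
lemma cutShare_eq {n k : ℕ} (hk : 1 ≤ k) (hn : k < n) :
    cutShare n k = (n.choose k * ((k : ℝ) / n) ^ k * (1 - (k : ℝ) / n) ^ (n - k)) *
      ((1 / k) * (1 / (1 - (k : ℝ) / n))) := by
  obtain ⟨i, rfl⟩ : ∃ i, n = k + i := ⟨n - k, by omega⟩
  have hi : 1 ≤ i := by omega
  have hk0 : (k : ℝ) ≠ 0 := by positivity
  have hi0 : (i : ℝ) ≠ 0 := by positivity
  have hn0 : ((k + i : ℕ) : ℝ) ≠ 0 := by positivity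
  have e1 : k + i - k = i := by omega
  have e2 : 1 - (k : ℝ) / (k + i : ℕ) = i / (k + i : ℕ) := by
    field_simp; push_cast; ring
  have f1 : ((k * k ^ (k - 2) : ℕ) : ℝ) * k = k ^ k := by
    rw [mul_pow_sub_two hk]
    have : k = k - 1 + 1 := by omega
    conv_rhs => rw [this, pow_succ, ← this]
    push_cast; rfl
  have f2 : ((i * i ^ (i - 2) : ℕ) : ℝ) * i = i ^ i := by
    rw [mul_pow_sub_two hi]
    have : i = i - 1 + 1 := by omega
    conv_rhs => rw [this, pow_succ, ← this]
    push_cast; rfl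
  have f3 : ((((k + i) ^ (k + i - 2) : ℕ) : ℝ) * ((k + i : ℕ) : ℝ)) * ((k + i : ℕ) : ℝ) =
      ((k + i : ℕ) : ℝ) ^ k * ((k + i : ℕ) : ℝ) ^ i := by
    have : k + i = k + i - 2 + 1 + 1 := by omega
    rw [← pow_add]
    conv_rhs => rw [this, pow_succ, pow_succ, ← this]
    push_cast; rfl
  rw [cutShare, cutCount, e1, e2, treeCount_eq k hk, treeCount_eq i hi,
    treeCount_eq (k + i) (by omega), div_pow, div_pow, ← f1, ← f2]
  have hden : (((k + i) ^ (k + i - 2) : ℕ) : ℝ) * ((k + i : ℕ) : ℝ) ≠ 0 := by positivity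
  have : ∀ c x y a N P Q D : ℝ, a ≠ 0 → N ≠ 0 → P ≠ 0 → Q ≠ 0 → D ≠ 0 → (i : ℝ) ≠ 0 →
      D * N = P * Q → c * (x * y) / D =
      c * (x * a / P) * (y * i / Q) * (1 / a * (1 / (i / N))) := by
    intro c x y a N P Q D ha hN hP hQ hD hi h
    field_simp
    linear_combination (-(c * x * y)) * h
  rw [← this _ _ _ _ _ _ _ (((k + i) ^ (k + i - 2) : ℕ) * ((k + i : ℕ) : ℝ)) hk0 hn0
    (by positivity) (by positivity) hden hi0 f3]
  push_cast
  ring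

lemma tendsto_cutShare {k : ℕ} (hk : 1 ≤ k) :
    Tendsto (fun n => cutShare n k) atTop
      (𝓝 ((k : ℝ) ^ (k - 1) * Real.exp (-(k : ℝ)) / (Nat.factorial k))) := by
  have hk0 : (k : ℝ) ≠ 0 := by positivity
  have hr : Tendsto (fun n : ℕ => (n : ℝ) * ((k : ℝ) / n)) atTop (𝓝 (k : ℝ)) := by
    refine tendsto_const_nhds.congr' ?_
    filter_upwards [eventually_ge_atTop 1] with n hn
    field_simp
  have h1 := ProbabilityTheory.tendsto_choose_mul_pow_of_tendsto_mul_atTop k hr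
  have h2 : Tendsto (fun n : ℕ => (k : ℝ) / n) atTop (𝓝 0) :=
    tendsto_const_div_atTop_nhds_zero_nat _
  have h3 : Tendsto (fun n : ℕ => (1 / (k : ℝ)) * (1 / (1 - (k : ℝ) / n))) atTop
      (𝓝 ((1 / (k : ℝ)) * (1 / (1 - 0)))) :=
    ((tendsto_const_nhds.div (tendsto_const_nhds.sub h2) (by norm_num)).const_mul _)
  have h4 := h1.mul h3
  have e : Real.exp (-(k : ℝ)) * (k : ℝ) ^ k / (k.factorial) * ((1 / (k : ℝ)) * (1 / (1 - 0))) =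
      (k : ℝ) ^ (k - 1) * Real.exp (-(k : ℝ)) / (Nat.factorial k) := by
    have : (k : ℝ) ^ k = k ^ (k - 1) * k := by
      rw [← pow_succ]; congr 1; omega
    rw [this]
    field_simp
    norm_num
  rw [e] at h4
  refine h4.congr' ?_
  filter_upwards [eventually_gt_atTop k] with n hn
  exact (cutShare_eq hk hn).symm

/-- The expected number of one-edge cuts with side of size at most `K` in a random tree on `n`
vertices, divided by `n`. -/
noncomputable def meanShare (K n : ℕ) : ℝ := ∑ k ∈ Finset.Icc 1 K, cutShare n k

lemma tendsto_meanShare (K : ℕ) : Tendsto (meanShare K) atTop (𝓝 (1 - hfun K)) := by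
  rw [hfun, sub_sub_cancel]
  exact tendsto_finsetSum _ fun k hk => tendsto_cutShare (Finset.mem_Icc.1 hk).1

lemma sum_cutCount_eq (K : ℕ) {n : ℕ} (hn : 1 ≤ n) :
    ((∑ k ∈ Finset.range (K + 1), cutCount n k : ℕ) : ℝ) = treeCount n * n * meanShare K n := by
  have ht : (0 : ℝ) < treeCount n := by exact_mod_cast treeCount_pos hn
  have hn' : (0 : ℝ) < n := by exact_mod_cast hn
  rw [sum_range_eq_Icc K _ (cutCount_zero n), meanShare, Finset.mul_sum, Nat.cast_sum]
  refine Finset.sum_congr rfl fun k _ => ?_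
  rw [cutShare, mul_div_cancel₀]
  positivity

lemma sum_cuts_real {K n : ℕ} (hn : 2 * K < n) :
    ∑ G ∈ trees (Fin n), ((cuts K G).card : ℝ) = treeCount n * n * meanShare K n := by
  rw [← sum_cutCount_eq K (by omega), ← Nat.cast_sum, sum_card_cuts K (by simp; omega),
    Fintype.card_fin]

lemma sum_cuts_sq_real {K n : ℕ} (hn : 2 * K < n) :
    ∑ G ∈ trees (Fin n), ((cuts K G).card : ℝ) ^ 2 ≤ treeCount n * n ^ 2 *
      (∑ k ∈ Finset.Icc 1 K, cutShare n k * (meanShare K (n - k) * (1 - (k : ℝ) / n)) +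
        2 * K / n) := by
  have ht : (0 : ℝ) < treeCount n := by exact_mod_cast treeCount_pos (by omega : 1 ≤ n)
  have hn' : (0 : ℝ) < n := by exact_mod_cast (by omega : 0 < n)
  have h := sum_card_cuts_sq_le (V := Fin n) (K := K) (by simpa using hn)
  rw [Fintype.card_fin, sum_range_eq_Icc K _ (by simp)] at h
  have h' : ∑ G ∈ trees (Fin n), ((cuts K G).card : ℝ) ^ 2 ≤
      ∑ k ∈ Finset.Icc 1 K, (n.choose k : ℝ) * (k * ((n - k : ℕ) : ℝ) *
        (treeCount k * ((∑ l ∈ Finset.range (K + 1), cutCount (n - k) l : ℕ) : ℝ))) +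
      treeCount n * (2 * K * n) := by exact_mod_cast h
  refine h'.trans (le_of_eq ?_)
  rw [mul_add, Finset.mul_sum]
  congr 1
  · refine Finset.sum_congr rfl fun k hk => ?_
    have hk' := Finset.mem_Icc.1 hk
    rw [sum_cutCount_eq K (by omega : 1 ≤ n - k), cutShare, cutCount]
    push_cast [Nat.cast_sub (by omega : k ≤ n)]
    field_simp
  · field_simp

/-- An upper bound for the mean square deviation of the number of small cuts from
`(1 - hfun K) * n`, divided by `n ^ 2`. -/
noncomputable def varBound (K n : ℕ) : ℝ :=
  (∑ k ∈ Finset.Icc 1 K, cutShare n k * (meanShare K (n - k) * (1 - (k : ℝ) / n)) + 2 * K / n) -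
    2 * (1 - hfun K) * meanShare K n + (1 - hfun K) ^ 2

lemma tendsto_varBound (K : ℕ) : Tendsto (varBound K) atTop (𝓝 0) := by
  have hm := tendsto_meanShare K
  have hsum : Tendsto (fun n : ℕ => ∑ k ∈ Finset.Icc 1 K,
      cutShare n k * (meanShare K (n - k) * (1 - (k : ℝ) / n))) atTop
      (𝓝 (∑ k ∈ Finset.Icc 1 K, (k : ℝ) ^ (k - 1) * Real.exp (-(k : ℝ)) / (Nat.factorial k) *
        ((1 - hfun K) * (1 - 0)))) := by
    refine tendsto_finsetSum _ fun k hk => ?_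
    refine (tendsto_cutShare (Finset.mem_Icc.1 hk).1).mul (Tendsto.mul ?_ ?_)
    · exact hm.comp (tendsto_sub_atTop_nat k)
    · exact tendsto_const_nhds.sub (tendsto_const_div_atTop_nhds_zero_nat _)
  rw [← Finset.sum_mul] at hsum
  have hc : ∑ k ∈ Finset.Icc 1 K, (k : ℝ) ^ (k - 1) * Real.exp (-(k : ℝ)) / (Nat.factorial k) =
      1 - hfun K := by rw [hfun, sub_sub_cancel]
  rw [hc] at hsum
  have h := ((hsum.add (tendsto_const_div_atTop_nhds_zero_nat (2 * (K : ℝ)))).sub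
    (hm.const_mul (2 * (1 - hfun K)))).add_const ((1 - hfun K) ^ 2)
  have e : (1 - hfun K) * ((1 - hfun K) * (1 - 0)) + 0 - 2 * (1 - hfun K) * (1 - hfun K) +
      (1 - hfun K) ^ 2 = 0 := by ring
  rw [e] at h
  exact h

lemma sum_sq_dev_le {K n : ℕ} (hn : 2 * K < n) :
    ∑ G ∈ trees (Fin n), (((cuts K G).card : ℝ) - (1 - hfun K) * n) ^ 2 ≤
      treeCount n * n ^ 2 * varBound K n := by
  have h1 := sum_cuts_real hn
  have h2 := sum_cuts_sq_real hn
  have e : ∑ G ∈ trees (Fin n), (((cuts K G).card : ℝ) - (1 - hfun K) * n) ^ 2 =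
      ∑ G ∈ trees (Fin n), ((cuts K G).card : ℝ) ^ 2 -
      2 * (1 - hfun K) * n * ∑ G ∈ trees (Fin n), ((cuts K G).card : ℝ) +
      treeCount n * ((1 - hfun K) * n) ^ 2 := by
    have : (treeCount n : ℝ) * ((1 - hfun K) * n) ^ 2 =
        ∑ G ∈ trees (Fin n), ((1 - hfun K) * n) ^ 2 := by
      rw [Finset.sum_const, nsmul_eq_mul]; rfl
    rw [this, Finset.mul_sum, ← Finset.sum_sub_distrib, ← Finset.sum_add_distrib]
    exact Finset.sum_congr rfl fun G _ => by ring
  rw [e, h1, varBound]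
  linarith

/-- The mean number of small cuts is at most `n`, hence so is its limit after division by `n`. -/
lemma hfun_nonneg (K : ℕ) : 0 ≤ hfun K := by
  suffices 1 - hfun K ≤ 1 by linarith
  refine le_of_tendsto (tendsto_meanShare K) ?_
  filter_upwards [eventually_gt_atTop (2 * K)] with n hn
  have ht : (0 : ℝ) < treeCount n := by exact_mod_cast treeCount_pos (by omega : 1 ≤ n)
  have hn' : (0 : ℝ) < n := by exact_mod_cast (by omega : 0 < n)
  have h1 := sum_cuts_real hn
  have h2 : ∑ G ∈ trees (Fin n), ((cuts K G).card : ℝ) ≤ ∑ G ∈ trees (Fin n), (n : ℝ) := by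
    refine Finset.sum_le_sum fun G hG => ?_
    have := card_cuts_le (V := Fin n) (by simpa using hn) (mem_trees.1 hG).connected
    rw [Fintype.card_fin] at this
    exact_mod_cast this
  have h3 : ∑ G ∈ trees (Fin n), (n : ℝ) = treeCount n * n := by
    rw [Finset.sum_const, nsmul_eq_mul]; rfl
  rw [h1, h3] at h2
  have : (0 : ℝ) < treeCount n * n := by positivity
  exact le_of_mul_le_mul_left (by linarith) this

lemma hfun_pos (K : ℕ) : 0 < hfun K := by
  have h := hfun_nonneg (K + 1)
  rw [hfun, Finset.sum_Icc_succ_top (by omega)] at h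
  have : (0 : ℝ) < ((K + 1 : ℕ) : ℝ) ^ (K + 1 - 1) * Real.exp (-((K + 1 : ℕ) : ℝ)) /
      (Nat.factorial (K + 1)) := by positivity
  rw [hfun]
  linarith

end Asymptotics

/-! ### Internal vertices and Chebyshev's inequality -/

section Final

/-- The vertices that are not internal are the roots of the small cuts. -/
lemma not_internal_iff {K n : ℕ} {G : SimpleGraph (Fin n)} (hG : G.IsTree) (v : Fin n) :
    ¬ InternalVtx K G v ↔ ∃ τ ∈ cuts K G, τ.2.1 = v := by
  have hcard : ∀ w, Nat.card {u : Fin n // (G.deleteEdges {s(v, w)}).Reachable v u} =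
      (Set.toFinset {u | (G.deleteEdges {s(v, w)}).Reachable v u}).card := fun w => by
    rw [Nat.card_eq_fintype_card, Set.toFinset_card]
    rfl
  simp only [InternalVtx, not_forall, not_lt]
  constructor
  · rintro ⟨w, hvw, hc⟩
    refine ⟨(Set.toFinset {u | (G.deleteEdges {s(v, w)}).Reachable v u}, v, w), mem_cuts.2 ⟨?_, ?_⟩,
      rfl⟩
    · rw [← hcard]; exact hc
    · rw [Set.coe_toFinset]; exact OneEdgeCut.of_adj hG hvw
  · rintro ⟨⟨S, v', w⟩, hτ, rfl : v' = v⟩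
    obtain ⟨hc, hP⟩ := mem_cuts.1 hτ
    refine ⟨w, hP.adj, ?_⟩
    rw [hcard]
    have := (OneEdgeCut.of_adj hG hP.adj).side_unique hP hG.connected
    simp only [this, Finset.toFinset_coe]
    exact hc

lemma card_internal {K n : ℕ} (hn : 2 * K < n) {G : SimpleGraph (Fin n)} (hG : G.IsTree) :
    (Nat.card {v : Fin n // InternalVtx K G v} : ℝ) = n - (cuts K G).card := by
  have h1 : (cuts K G).card = (Finset.univ.filter fun v => ¬ InternalVtx K G v).card := by
    rw [← Finset.card_image_of_injOn
      (cuts_injOn (V := Fin n) (by simpa using hn) hG.connected)]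
    congr 1
    ext v
    simp only [Finset.mem_image, Finset.mem_filter, Finset.mem_univ, true_and,
      not_internal_iff hG]
  have h2 := Finset.card_filter_add_card_filter_not (s := (Finset.univ : Finset (Fin n)))
    (fun v => InternalVtx K G v)
  rw [← h1, Finset.card_univ, Fintype.card_fin] at h2
  rw [Nat.card_eq_fintype_card, Fintype.card_subtype, eq_sub_iff_add_eq]
  exact_mod_cast h2

lemma treeProb_eq (n : ℕ) (p : SimpleGraph (Fin n) → Prop) :
    treeProb n p = ((trees (Fin n)).filter p).card / treeCount n := by
  rw [treeProb, treeCount, Nat.card_eq_fintype_card, Nat.card_eq_fintype_card,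
    Fintype.card_subtype, Fintype.card_subtype, trees, Finset.filter_filter]
  congr!

lemma treeProb_le_one (n : ℕ) (p : SimpleGraph (Fin n) → Prop) : treeProb n p ≤ 1 := by
  rw [treeProb_eq]
  refine div_le_one_of_le₀ ?_ (by positivity)
  exact_mod_cast Finset.card_filter_le _ _

/-- Chebyshev's inequality for the number of small cuts. -/
lemma treeProb_ge {K n : ℕ} (hn : 2 * K < n) {ε : ℝ} (hε : 0 < ε) :
    1 - varBound K n / (ε * hfun K) ^ 2 ≤ treeProb n (fun G =>
      (1 - ε) * hfun K * n ≤ (Nat.card {v : Fin n // InternalVtx K G v} : ℝ) ∧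
      (Nat.card {v : Fin n // InternalVtx K G v} : ℝ) ≤ (1 + ε) * hfun K * n) := by
  have ht : (0 : ℝ) < treeCount n := by exact_mod_cast treeCount_pos (by omega : 1 ≤ n)
  have hn' : (0 : ℝ) < n := by exact_mod_cast (by omega : 0 < n)
  have hh := hfun_pos K
  set p : SimpleGraph (Fin n) → Prop := fun G =>
      (1 - ε) * hfun K * n ≤ (Nat.card {v : Fin n // InternalVtx K G v} : ℝ) ∧
      (Nat.card {v : Fin n // InternalVtx K G v} : ℝ) ≤ (1 + ε) * hfun K * n with hp
  clear_value p
  rw [treeProb_eq]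
  have hbad : (((trees (Fin n)).filter fun G => ¬ p G).card : ℝ) * (ε * hfun K * n) ^ 2 ≤
      treeCount n * n ^ 2 * varBound K n := by
    refine le_trans ?_ (sum_sq_dev_le hn)
    rw [← nsmul_eq_mul, ← Finset.sum_const]
    refine le_trans (Finset.sum_le_sum fun G hG => ?_)
      (Finset.sum_le_sum_of_subset_of_nonneg (Finset.filter_subset (fun G => ¬ p G) _)
        fun G _ _ => sq_nonneg _)
    obtain ⟨hG, hnp⟩ := Finset.mem_filter.1 hG
    simp only [hp, card_internal hn (mem_trees.1 hG)] at hnp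
    rw [sq_le_sq, abs_of_nonneg (by positivity)]
    by_contra hlt
    rw [not_le, abs_lt] at hlt
    exact hnp ⟨by linarith, by linarith⟩
  have hsplit := Finset.card_filter_add_card_filter_not (s := trees (Fin n)) p
  have hsplit' : (((trees (Fin n)).filter p).card : ℝ) +
      ((trees (Fin n)).filter fun G => ¬ p G).card = treeCount n := by
    exact_mod_cast hsplit
  rw [le_div_iff₀ ht]
  have hδ : 0 < (ε * hfun K) ^ 2 := by positivity
  have hbad' : (((trees (Fin n)).filter fun G => ¬ p G).card : ℝ) ≤
      varBound K n / (ε * hfun K) ^ 2 * treeCount n := by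
    rw [div_mul_eq_mul_div, le_div_iff₀ hδ]
    have hn2 : (0 : ℝ) < n ^ 2 := by positivity
    refine le_of_mul_le_mul_right ?_ hn2
    calc _ = (((trees (Fin n)).filter fun G => ¬ p G).card : ℝ) * (ε * hfun K * n) ^ 2 := by ring
      _ ≤ _ := hbad
      _ = _ := by ring
  linarith

end Final

end Proof

/-- For fixed `K ≥ 1` and every `ε > 0`, a.a.s. the number `|R|` of internal vertices of
`𝒯_n` satisfies `(1-ε) h(K) n ≤ |R| ≤ (1+ε) h(K) n`. -/
theorem aas_internal_count (K : ℕ) (hK : 1 ≤ K) :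
    ∀ ε : ℝ, 0 < ε →
      Tendsto (fun n : ℕ =>
        treeProb n (fun G =>
          (1 - ε) * hfun K * n ≤ (Nat.card {v : Fin n // InternalVtx K G v} : ℝ) ∧
          (Nat.card {v : Fin n // InternalVtx K G v} : ℝ) ≤ (1 + ε) * hfun K * n))
        atTop (𝓝 1) := by
  intro ε hε
  have hlow : Tendsto (fun n => 1 - varBound K n / (ε * hfun K) ^ 2) atTop (𝓝 1) := by
    simpa using ((tendsto_varBound K).div_const ((ε * hfun K) ^ 2)).const_sub 1
  refine tendsto_of_tendsto_of_tendsto_of_le_of_le' hlow tendsto_const_nhds ?_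
    (Eventually.of_forall fun n => treeProb_le_one n _)
  filter_upwards [eventually_gt_atTop (2 * K)] with n hn
  exact treeProb_ge hn hε
end

section
/- Let h(K) := 1 − ∑_{k=1}^{K} k^{k−1} e^{−k}/k!. Then h(K) = Θ(1/√K): there exist constants c₁, c₂ > 0 such that for all K ≥ 1, c₁/√K ≤ h(K) ≤ c₂/√K. -/
open Filter Topology Real

/-- The Borel probabilities `k^{k-1} e^{-k} / k!` for `k ≥ 1`. The form `k^k / k` makes the value
at `k = 0` equal to `0`, by the convention on division by zero. -/
noncomputable def borelTerm (k : ℕ) : ℝ :=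
  (k : ℝ) ^ k * exp (-(k : ℝ)) / (k * k.factorial)

lemma borelTerm_zero : borelTerm 0 = 0 := by simp [borelTerm]

lemma borelTerm_nonneg (k : ℕ) : 0 ≤ borelTerm k := by unfold borelTerm; positivity

lemma borelTerm_of_pos {k : ℕ} (hk : 1 ≤ k) :
    borelTerm k = (k : ℝ) ^ (k - 1) * exp (-(k : ℝ)) / k.factorial := by
  obtain ⟨m, rfl⟩ := Nat.exists_eq_add_of_le' hk
  have : ((m + 1 : ℕ) : ℝ) ≠ 0 := by positivity
  have h2 : ((m + 1).factorial : ℝ) ≠ 0 := by positivity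
  unfold borelTerm
  rw [Nat.add_sub_cancel, pow_succ]
  field_simp

/-! ### Size of the terms -/

lemma borelTerm_eq_stirlingSeq {k : ℕ} (hk : 1 ≤ k) :
    borelTerm k = 1 / (k * √k * (√2 * Stirling.stirlingSeq k)) := by
  have hk' : (0 : ℝ) < k := by exact_mod_cast hk
  have h2 : (k.factorial : ℝ) ≠ 0 := by positivity
  unfold borelTerm Stirling.stirlingSeq
  rw [Real.sqrt_mul (by norm_num), div_pow, ← Real.exp_nat_mul, mul_one, Real.exp_neg]
  field_simp

lemma borelTerm_le {k : ℕ} (hk : 1 ≤ k) : borelTerm k ≤ 1 / (k * √k) := by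
  have hk' : (0 : ℝ) < k := by exact_mod_cast hk
  rw [borelTerm_eq_stirlingSeq hk]
  have h1 : √π ≤ Stirling.stirlingSeq k := Stirling.sqrt_pi_le_stirlingSeq (by omega)
  have h2 : 1 ≤ √π := Real.one_le_sqrt.2 (by linarith [Real.pi_gt_three])
  have h3 : 1 ≤ √(2 : ℝ) := Real.one_le_sqrt.2 (by norm_num)
  apply one_div_le_one_div_of_le (by positivity)
  exact le_mul_of_one_le_right (by positivity) (one_le_mul_of_one_le_of_one_le h3 (h2.trans h1))

lemma le_borelTerm {k : ℕ} (hk : 1 ≤ k) : exp (-1) / (k * √k) ≤ borelTerm k := by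
  have hk' : (0 : ℝ) < k := by exact_mod_cast hk
  obtain ⟨m, rfl⟩ := Nat.exists_eq_add_of_le' hk
  rw [borelTerm_eq_stirlingSeq hk]
  have h1 : Stirling.stirlingSeq (m + 1) ≤ exp 1 / √2 := by
    have := Stirling.stirlingSeq'_antitone (Nat.zero_le m)
    simpa [Stirling.stirlingSeq_one] using this
  have h0 := Stirling.stirlingSeq'_pos m
  have h3 : √2 * Stirling.stirlingSeq (m + 1) ≤ exp 1 := by
    rw [le_div_iff₀ (by positivity)] at h1
    linarith
  rw [Real.exp_neg, inv_eq_one_div, div_div]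
  apply one_div_le_one_div_of_le (by positivity)
  rw [mul_comm (exp 1)]
  gcongr

lemma summable_borelTerm : Summable borelTerm := by
  have h : Summable fun k : ℕ => 1 / (k : ℝ) ^ (3 / 2 : ℝ) :=
    Real.summable_one_div_nat_rpow.2 (by norm_num)
  refine h.of_nonneg_of_le borelTerm_nonneg fun k => ?_
  rcases Nat.eq_zero_or_pos k with rfl | hk
  · simp [borelTerm_zero]
  · refine (borelTerm_le hk).trans_eq ?_
    have hk' : (0 : ℝ) < k := by exact_mod_cast hk
    rw [Real.sqrt_eq_rpow, show (3 / 2 : ℝ) = 1 + 1 / 2 by norm_num, Real.rpow_add hk',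
      Real.rpow_one]

/-! ### Total mass -/

/-- The coefficient of `u ^ n` in the expansion of `∑ k^{k-1}/k! (u e^{-u})^k`; for `n ≥ 2` it
vanishes, being an `n`-th finite difference of `x ↦ x ^ (n - 1)`. -/
lemma sum_antidiagonal_coeff (n : ℕ) :
    ∑ p ∈ Finset.HasAntidiagonal.antidiagonal n,
      ((p.1 : ℝ) ^ p.1 / (p.1 * p.1.factorial)) * ((-(p.1 : ℝ)) ^ p.2 / p.2.factorial)
      = if n = 1 then 1 else 0 := by
  rcases n with _ | _ | n
  · simp
  · simp [Finset.Nat.antidiagonal_succ]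
  · have hd := congrFun (fwdDiff_iter_pow_eq_zero_of_lt (R := ℝ) (Nat.lt_succ_self (n + 1))) 0
    rw [fwdDiff_iter_eq_sum_shift] at hd
    rw [Finset.Nat.sum_antidiagonal_eq_sum_range_succ (fun i j =>
      ((i : ℝ) ^ i / (i * i.factorial)) * ((-(i : ℝ)) ^ j / j.factorial))]
    have h0 : ((n + 2).factorial : ℝ) ≠ 0 := by positivity
    rw [if_neg (by omega), ← mul_right_inj' h0, mul_zero]
    refine Eq.trans ?_ hd
    rw [Finset.mul_sum]
    refine Finset.sum_congr rfl fun k hk => ?_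
    rw [Finset.mem_range] at hk
    have hk2 : k ≤ n + 2 := by omega
    rcases Nat.eq_zero_or_pos k with rfl | hkpos
    · simp
    · have hk' : (k : ℝ) ≠ 0 := by positivity
      have hc : ((n + 2).choose k : ℝ) * k.factorial * (n + 2 - k).factorial
          = (n + 2).factorial := by exact_mod_cast Nat.choose_mul_factorial_mul_factorial hk2
      have e1 : (k : ℝ) ^ k * (k : ℝ) ^ (n + 2 - k) = (k : ℝ) ^ (n + 1) * k := by
        rw [← pow_add, ← pow_succ]; congr 1; omega
      have h1 : (k.factorial : ℝ) ≠ 0 := by positivity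
      have h2 : ((n + 2 - k).factorial : ℝ) ≠ 0 := by positivity
      simp only [zero_add, nsmul_eq_mul, mul_one, zsmul_eq_mul, Nat.succ_eq_add_one]
      push_cast
      rw [neg_pow, ← hc]
      field_simp
      linear_combination ((n + 2).choose k : ℝ) * e1

/-- `F(u) = ∑ a k (u e^{1-u})^k`, that is, `T(u e^{-u})` for the tree function
`T(x) = ∑ k^{k-1} x^k / k!`. -/
noncomputable def borelGen (u : ℝ) : ℝ := ∑' k, borelTerm k * (u * exp (1 - u)) ^ k

lemma borelGen_eq_of_small {u : ℝ} (h0 : 0 < u) (h1 : u < 1 / 5) : borelGen u = u := by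
  set f : ℕ × ℕ → ℝ := fun p =>
    ((p.1 : ℝ) ^ p.1 / (p.1 * p.1.factorial)) * u ^ p.1 * ((-(p.1 * u)) ^ p.2 / p.2.factorial)
    with hf
  have hexp (x : ℝ) : HasSum (fun j : ℕ => x ^ j / j.factorial) (exp x) := by
    rw [Real.exp_eq_exp_ℝ]; exact NormedSpace.expSeries_div_hasSum_exp x
  -- Both inner sums, of `f` and of `|f|`, are exponential series.
  have hinner (x : ℝ) (k : ℕ) : (k : ℝ) ^ k / (k * k.factorial) * u ^ k * exp (k * x)
      = borelTerm k * (u * exp (1 + x)) ^ k := by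
    unfold borelTerm
    rw [mul_pow, ← Real.exp_nat_mul, mul_add, Real.exp_add, mul_one, Real.exp_neg]
    field_simp
  have hnorm (k : ℕ) : HasSum (fun j => ‖f (k, j)‖) (borelTerm k * (u * exp (1 + u)) ^ k) := by
    rw [← hinner u k]
    refine ((hexp (k * u)).mul_left ((k : ℝ) ^ k / (k * k.factorial) * u ^ k)).congr_fun ?_
    intro j
    simp [hf, abs_of_pos h0]
  -- `u e^{1+u} ≤ 1` holds for `u ≤ 0.278…`.
  have hsmall : u * exp (1 + u) ≤ 1 := by
    have e1 : exp 1 < 2.7182818286 := Real.exp_one_lt_d9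
    have e2 : exp u ≤ 1 / (1 - u) := Real.exp_bound_div_one_sub_of_interval h0.le (by linarith)
    have e3 : exp u ≤ 5 / 4 := e2.trans (by rw [div_le_iff₀ (by linarith)]; linarith)
    rw [Real.exp_add]
    have := Real.exp_pos u
    calc u * (exp 1 * exp u) ≤ 1 / 5 * (2.7182818286 * (5 / 4)) := by gcongr
      _ ≤ 1 := by norm_num
  have hsum : Summable f := by
    apply Summable.of_norm
    rw [summable_prod_of_nonneg (fun _ => norm_nonneg _)]
    refine ⟨fun k => (hnorm k).summable, ?_⟩
    simp_rw [fun k => (hnorm k).tsum_eq]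
    refine summable_borelTerm.of_nonneg_of_le
      (fun k => mul_nonneg (borelTerm_nonneg k) (by positivity)) fun k => ?_
    exact mul_le_of_le_one_right (borelTerm_nonneg k) (pow_le_one₀ (by positivity) hsmall)
  have hrow : ∑' p, f p = borelGen u := by
    rw [hsum.tsum_prod, borelGen]
    refine tsum_congr fun k => ?_
    have := (hexp (k * (-u))).mul_left ((k : ℝ) ^ k / (k * k.factorial) * u ^ k)
    rw [hinner (-u) k] at this
    rw [sub_eq_add_neg, ← this.tsum_eq]
    simp [hf]
  have hdiag : ∑' p, f p = u := by
    have hs := Finset.HasAntidiagonal.sigmaAntidiagonalEquivProd.summable_iff.2 hsum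
    rw [← Finset.HasAntidiagonal.sigmaAntidiagonalEquivProd.tsum_eq f]
    refine hs.tsum_sigma.trans ?_
    simp only [Function.comp_apply]
    have hn (n : ℕ) : (∑' c : Finset.HasAntidiagonal.antidiagonal n,
        f (Finset.HasAntidiagonal.sigmaAntidiagonalEquivProd ⟨n, c⟩)) = if n = 1 then u else 0 := by
      rw [tsum_fintype]
      simp only [Finset.HasAntidiagonal.sigmaAntidiagonalEquivProd_apply]
      rw [Finset.sum_coe_sort (Finset.HasAntidiagonal.antidiagonal n) f]
      have : ∀ p ∈ Finset.HasAntidiagonal.antidiagonal n, f p =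
          ((p.1 : ℝ) ^ p.1 / (p.1 * p.1.factorial)) * ((-(p.1 : ℝ)) ^ p.2 / p.2.factorial)
            * u ^ n := by
        intro p hp
        rw [← Finset.HasAntidiagonal.mem_antidiagonal.1 hp, pow_add]
        simp only [hf]
        rw [← neg_mul, mul_pow]
        ring
      rw [Finset.sum_congr rfl this, ← Finset.sum_mul, sum_antidiagonal_coeff]
      split_ifs with h
      · simp [h]
      · simp
    simp_rw [hn]
    exact tsum_ite_eq 1 _
  rw [← hrow, hdiag]

lemma mul_exp_one_sub_le (u : ℝ) : u * exp (1 - u) ≤ 1 := by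
  have h := Real.add_one_le_exp (u - 1)
  rw [← neg_sub u 1, Real.exp_neg, ← div_eq_mul_inv, div_le_one (Real.exp_pos _)]
  linarith

lemma mul_exp_one_sub_lt {u : ℝ} (hu : u ≠ 1) : u * exp (1 - u) < 1 := by
  have h := Real.add_one_lt_exp (sub_ne_zero.2 hu)
  rw [← neg_sub u 1, Real.exp_neg, ← div_eq_mul_inv, div_lt_one (Real.exp_pos _)]
  linarith

lemma analyticOnNhd_borelGen : AnalyticOnNhd ℝ borelGen (Set.Ioo 0 1) := by
  set p := FormalMultilinearSeries.ofScalars ℝ borelTerm with hp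
  have hr : (1 : ENNReal) ≤ p.radius := by
    have : ((1 : NNReal) : ENNReal) ≤ p.radius := by
      apply p.le_radius_of_summable
      simpa [hp, FormalMultilinearSeries.ofScalars_norm, abs_of_nonneg (borelTerm_nonneg _)]
        using summable_borelTerm
    simpa using this
  have hps := p.hasFPowerSeriesOnBall (lt_of_lt_of_le one_pos hr)
  intro u hu
  have hu0 : 0 < u := hu.1
  have hT : AnalyticAt ℝ p.sum (u * exp (1 - u)) := by
    apply hps.analyticAt_of_mem
    refine Metric.eball_subset_eball hr ?_
    rw [Metric.mem_eball, edist_dist, Real.dist_0_eq_abs, abs_of_pos (by positivity)]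
    exact (ENNReal.ofReal_lt_one).2 (mul_exp_one_sub_lt hu.2.ne)
  have hg : AnalyticAt ℝ (fun u : ℝ => u * exp (1 - u)) u := by fun_prop
  have hc : AnalyticAt ℝ (fun u : ℝ => p.sum (u * exp (1 - u))) u :=
    AnalyticAt.fun_comp (g := p.sum) hT hg
  refine hc.congr (Filter.Eventually.of_forall fun v => ?_)
  have := FormalMultilinearSeries.ofScalars_sum_eq (E := ℝ) borelTerm (v * exp (1 - v))
  simpa [borelGen, FormalMultilinearSeries.ofScalarsSum] using this

lemma borelGen_eq {u : ℝ} (hu : u ∈ Set.Ioo (0 : ℝ) 1) : borelGen u = u := by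
  refine analyticOnNhd_borelGen.eqOn_of_preconnected_of_eventuallyEq (g := fun u => u)
    (fun _ _ => analyticAt_id) isPreconnected_Ioo (z₀ := 1 / 10) (by norm_num) ?_ hu
  filter_upwards [Ioo_mem_nhds (show (0 : ℝ) < 1 / 10 by norm_num)
    (show (1 / 10 : ℝ) < 1 / 5 by norm_num)] with v hv
  exact borelGen_eq_of_small hv.1 hv.2

lemma hasSum_borelTerm : HasSum borelTerm 1 := by
  have hcont : ContinuousOn borelGen (Set.Icc 0 1) := by
    refine continuousOn_tsum (fun k => by fun_prop) summable_borelTerm fun k u hu => ?_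
    have hu0 : 0 ≤ u := hu.1
    rw [Real.norm_of_nonneg (mul_nonneg (borelTerm_nonneg k) (by positivity))]
    exact mul_le_of_le_one_right (borelTerm_nonneg k)
      (pow_le_one₀ (by positivity) (mul_exp_one_sub_le u))
  have h1 : Set.EqOn borelGen (fun u => u) (Set.Icc 0 1) := by
    refine Set.EqOn.of_subset_closure (s := Set.Ioo 0 1) (fun u hu => borelGen_eq hu) hcont
      continuousOn_id Set.Ioo_subset_Icc_self ?_
    rw [closure_Ioo (by norm_num)]
  have h2 : ∑' k, borelTerm k = 1 := by
    simpa [borelGen] using h1 (Set.right_mem_Icc.2 zero_le_one)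
  exact h2 ▸ summable_borelTerm.hasSum

/-! ### The tail -/

lemma hfun_eq (K : ℕ) : hfun K = 1 - ∑ k ∈ Finset.range (K + 1), borelTerm k := by
  rw [hfun, Finset.range_eq_Ico, Finset.sum_eq_sum_Ico_succ_bot (by omega), borelTerm_zero,
    zero_add, zero_add]
  congr 1
  refine Finset.sum_congr rfl fun k hk => (borelTerm_of_pos (Finset.mem_Icc.1 hk).1).symm

lemma hfun_succ (K : ℕ) : hfun (K + 1) = hfun K - borelTerm (K + 1) := by
  rw [hfun_eq, hfun_eq, Finset.sum_range_succ _ (K + 1)]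
  ring

lemma tendsto_hfun : Tendsto hfun atTop (𝓝 0) := by
  have h := (hasSum_borelTerm.tendsto_sum_nat.comp (tendsto_add_atTop_nat 1)).const_sub 1
  rw [sub_self] at h
  exact h.congr fun K => (hfun_eq K).symm

lemma tendsto_div_sqrt (c : ℝ) (m : ℕ) :
    Tendsto (fun n : ℕ => c / √((n + m : ℕ) : ℝ)) atTop (𝓝 0) :=
  Tendsto.const_div_atTop (Real.tendsto_sqrt_atTop.comp
    (tendsto_natCast_atTop_atTop.comp (tendsto_add_atTop_nat m))) c

lemma inv_sqrt_sub {x : ℝ} (hx : 0 < x) :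
    1 / √x - 1 / √(x + 1) = 1 / (√x * √(x + 1) * (√x + √(x + 1))) := by
  have h1 : 0 < √x := Real.sqrt_pos.2 hx
  have h2 : 0 < √(x + 1) := Real.sqrt_pos.2 (by linarith)
  have e1 := Real.sq_sqrt hx.le
  have e2 := Real.sq_sqrt (show 0 ≤ x + 1 by linarith)
  field_simp
  linear_combination e2 - e1

lemma inv_sqrt_sub_le {x : ℝ} (hx : 0 < x) : 1 / √x - 1 / √(x + 1) ≤ 1 / (x * √x) := by
  rw [inv_sqrt_sub hx]
  have h1 : 0 < √x := Real.sqrt_pos.2 hx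
  have h : √x ≤ √(x + 1) := Real.sqrt_le_sqrt (by linarith)
  apply one_div_le_one_div_of_le (by positivity)
  calc x * √x = √x * √x * √x := by rw [Real.mul_self_sqrt hx.le]
    _ ≤ √x * √(x + 1) * (√x + √(x + 1)) := by gcongr; linarith

lemma le_inv_sqrt_sub {x : ℝ} (hx : 0 < x) :
    1 / ((x + 1) * √(x + 1)) ≤ 2 * (1 / √x - 1 / √(x + 1)) := by
  rw [inv_sqrt_sub hx, mul_one_div]
  have h1 : 0 < √x := Real.sqrt_pos.2 hx
  have h : √x ≤ √(x + 1) := Real.sqrt_le_sqrt (by linarith)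
  rw [div_le_div_iff₀ (by positivity) (by positivity), one_mul]
  calc √x * √(x + 1) * (√x + √(x + 1))
      ≤ √(x + 1) * √(x + 1) * (√(x + 1) + √(x + 1)) := by gcongr
    _ = 2 * ((x + 1) * √(x + 1)) := by
      rw [Real.mul_self_sqrt (by linarith)]; ring

lemma hfun_le {K : ℕ} (hK : 1 ≤ K) : hfun K ≤ 2 / √(K : ℝ) := by
  have hanti : Antitone fun n : ℕ => 2 / √((n + 1 : ℕ) : ℝ) - hfun (n + 1) := by
    refine antitone_nat_of_succ_le fun n => ?_
    have h1 := borelTerm_le (show 1 ≤ n + 1 + 1 by omega)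
    have h2 := le_inv_sqrt_sub (show (0 : ℝ) < n + 1 by positivity)
    rw [hfun_succ (n + 1)]
    push_cast at h1 ⊢
    have e (y : ℝ) : 2 / y = 2 * (1 / y) := by ring
    rw [e, e]
    linarith
  have hlim := (tendsto_div_sqrt 2 1).sub (tendsto_hfun.comp (tendsto_add_atTop_nat 1))
  rw [sub_zero] at hlim
  obtain ⟨n, rfl⟩ := Nat.exists_eq_add_of_le' hK
  have := hanti.le_of_tendsto hlim n
  linarith

lemma le_hfun (K : ℕ) : exp (-1) / √((K + 1 : ℕ) : ℝ) ≤ hfun K := by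
  have hanti : Antitone fun n : ℕ => hfun n - exp (-1) / √((n + 1 : ℕ) : ℝ) := by
    refine antitone_nat_of_succ_le fun n => ?_
    have h1 := le_borelTerm (show 1 ≤ n + 1 by omega)
    have h2 := inv_sqrt_sub_le (show (0 : ℝ) < n + 1 by positivity)
    have h3 := mul_le_mul_of_nonneg_left h2 (Real.exp_pos (-1)).le
    rw [hfun_succ n]
    push_cast at h1 ⊢
    rw [mul_sub, mul_one_div, mul_one_div, mul_one_div] at h3
    linarith
  have hlim := tendsto_hfun.sub (tendsto_div_sqrt (exp (-1)) 1)
  rw [sub_zero] at hlim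
  have := hanti.le_of_tendsto hlim K
  linarith

/-- `h(K) = Θ(1/√K)`: there are constants `c₁, c₂ > 0` with
`c₁/√K ≤ h(K) ≤ c₂/√K` for all `K ≥ 1`. -/
theorem hfun_theta_inv_sqrt :
    ∃ c₁ c₂ : ℝ, 0 < c₁ ∧ 0 < c₂ ∧ ∀ K : ℕ, 1 ≤ K →
      c₁ / Real.sqrt K ≤ hfun K ∧ hfun K ≤ c₂ / Real.sqrt K := by
  refine ⟨exp (-1) / √2, 2, by positivity, by norm_num, fun K hK => ⟨?_, hfun_le hK⟩⟩
  refine le_trans ?_ (le_hfun K)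
  have hK' : (1 : ℝ) ≤ K := by exact_mod_cast hK
  rw [div_div, ← Real.sqrt_mul (by norm_num)]
  -- `K + 1 ≤ 2K` absorbs the shift of the index.
  gcongr
  push_cast
  linarith
end

section
/- The series ∑_{k=1}^{∞} k^{k−1} e^{−k}/k! converges and its sum equals 1; equivalently, ∑_{k=1}^{∞} (k/e)^k/(k·k!) = 1. -/
/-!
Let `T(z) = ∑_{k ≥ 1} k^{k-1} z^k / k!` be the tree function. The theorem is `T(e⁻¹) = 1`, the
boundary case `x = 1` of the identity `T(x e^{-x}) = x` on `[0, 1]`.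

For small `x > 0` expand `e^{-kx}` in `∑ k^{k-1} x^k e^{-kx} / k!` and rearrange by total degree in
`x` (`tree_hasSum_small`). The coefficient of `x^n / n!` is `∑_k (-1)^{n-k} (n choose k) k^{n-1}`,
the `n`-th finite difference of a polynomial of degree `n - 1`; it vanishes for `n ≥ 2`
(`tree_antidiagonal`), so only the term `x` survives.

Since `k^k / k! ≤ e^k`, the power series `T` has radius of convergence at least `e⁻¹`, and
`0 < x e^{-x} < e⁻¹` on `(0, 1)`. Hence `x ↦ T(x e^{-x})` is analytic there, and the identity
theorem extends the identity to `(0, 1)` (`tree_hasSum`).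

The terms are nonnegative, continuous in `x`, and at most their values at `x = 1`. Letting `x → 1⁻`,
the partial sums at `1` are at most `1`, while the full sum at `1` is at least `x` for each `x < 1`.
-/

open Filter Topology Finset

/-- The coefficients `k^{k-1} / k!` of the tree function, with value `0` at `k = 0`. -/
noncomputable def treeCoeff (k : ℕ) : ℝ :=
  if k = 0 then 0 else (k : ℝ) ^ (k - 1) / (Nat.factorial k)

lemma treeCoeff_nonneg (k : ℕ) : 0 ≤ treeCoeff k := by
  unfold treeCoeff; split_ifs <;> positivity

lemma treeCoeff_le (k : ℕ) : treeCoeff k ≤ Real.exp 1 ^ k := by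
  unfold treeCoeff
  split_ifs with h
  · positivity
  · have h1 : (1 : ℝ) ≤ k := by exact_mod_cast Nat.one_le_iff_ne_zero.2 h
    calc (k : ℝ) ^ (k - 1) / (Nat.factorial k) ≤ (k : ℝ) ^ k / (Nat.factorial k) := by
          gcongr
          omega
      _ ≤ Real.exp k := Real.pow_div_factorial_le_exp _ (by positivity) k
      _ = Real.exp 1 ^ k := by rw [← Real.exp_nat_mul, mul_one]

/-- The coefficient of degree `n` in the expansion of `∑ k, treeCoeff k * x ^ k * exp (-(k * x))`
in powers of `x` vanishes unless `n = 1`. -/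
lemma tree_antidiagonal (x : ℝ) (n : ℕ) :
    ∑ p ∈ antidiagonal n,
      treeCoeff p.1 * x ^ p.1 * ((-(p.1 * x)) ^ p.2 / (Nat.factorial p.2)) =
      if n = 1 then x else 0 := by
  rcases n with _ | _ | n
  · simp [treeCoeff]
  · simp [treeCoeff, Finset.Nat.antidiagonal_succ]
  · have h := congrFun (fwdDiff_iter_pow_eq_zero_of_lt (R := ℝ) (Nat.lt_succ_self (n + 1))) 0
    rw [fwdDiff_iter_eq_sum_shift] at h
    rw [Finset.Nat.sum_antidiagonal_eq_sum_range_succ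
      (f := fun k m : ℕ => treeCoeff k * x ^ k * ((-(k * x)) ^ m / (Nat.factorial m)))]
    have h2 : (∑ k ∈ range (n + 1 + 1).succ, treeCoeff k * x ^ k *
        ((-(k * x)) ^ (n + 1 + 1 - k) / (Nat.factorial (n + 1 + 1 - k)))) =
        x ^ (n + 2) / (Nat.factorial (n + 2)) * ∑ k ∈ range (n + 1 + 1 + 1),
          ((-1 : ℤ) ^ (n + 1 + 1 - k) * (n + 1 + 1).choose k) •
            ((0 : ℝ) + k • (1 : ℝ)) ^ (n + 1) := by
      rw [Finset.mul_sum]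
      refine Finset.sum_congr rfl fun k hk => ?_
      have hk' : k ≤ n + 2 := by
        have := Finset.mem_range.1 hk
        omega
      obtain ⟨m, hm⟩ := Nat.exists_eq_add_of_le hk'
      have e1 : n + 1 + 1 - k = m := by omega
      rcases Nat.eq_zero_or_pos k with rfl | hk0
      · simp [treeCoeff]
      · have e2 : n + 1 = (k - 1) + m := by omega
        have e3 : ((n + 1 + 1).choose k : ℝ) =
            (n + 2).factorial / (k.factorial * m.factorial) := by
          rw [show n + 1 + 1 = n + 2 from rfl, Nat.cast_choose ℝ hk', hm, Nat.add_sub_cancel_left]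
        have e4 : x ^ (n + 2) = x ^ k * x ^ m := by rw [hm, pow_add]
        have hf : ((n + 2).factorial : ℝ) ≠ 0 := by positivity
        have e5 : (k : ℝ) ^ (n + 1) = (k : ℝ) ^ (k - 1) * (k : ℝ) ^ m := by rw [e2, pow_add]
        rw [e1, zsmul_eq_mul, nsmul_eq_mul, mul_one, zero_add, e5, e4]
        push_cast
        rw [e3, treeCoeff, if_neg hk0.ne', neg_pow, mul_pow]
        field_simp
    rw [h2, h]
    simp

/-- The identity `T(x e^{-x}) = x` for small `x`; the bound `1/9` makes `x e^{1+x} < 1`, which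
gives absolute convergence of the double series. -/
lemma tree_hasSum_small {x : ℝ} (hx0 : 0 < x) (hx : x < 1 / 9) :
    HasSum (fun k => treeCoeff k * (x * Real.exp (-x)) ^ k) x := by
  set g : ℕ × ℕ → ℝ := fun p =>
    treeCoeff p.1 * x ^ p.1 * ((-(p.1 * x)) ^ p.2 / (Nat.factorial p.2)) with hg
  have hexp (y : ℝ) : HasSum (fun m : ℕ => y ^ m / (Nat.factorial m)) (Real.exp y) := by
    rw [Real.exp_eq_exp_ℝ]
    exact NormedSpace.expSeries_div_hasSum_exp y
  have hnorm (k m : ℕ) :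
      ‖g (k, m)‖ = treeCoeff k * x ^ k * ((k * x) ^ m / (Nat.factorial m)) := by
    simp only [hg, norm_mul, norm_div, norm_pow, norm_neg, Real.norm_eq_abs, Nat.abs_cast,
      abs_of_nonneg (treeCoeff_nonneg k), abs_of_pos hx0]
  have hsum : Summable g := by
    refine Summable.of_norm ((summable_prod_of_nonneg fun _ => norm_nonneg _).2 ⟨fun k => ?_, ?_⟩)
    · simp only [hnorm]
      exact (hexp _).summable.mul_left _
    · simp only [hnorm, tsum_mul_left, (hexp _).tsum_eq]
      have hr : Real.exp 1 * x * Real.exp 1 < 1 := by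
        have := Real.exp_one_lt_d9
        have := Real.exp_pos 1
        have h9 : Real.exp 1 * Real.exp 1 < 9 := by nlinarith
        nlinarith
      refine Summable.of_nonneg_of_le
        (fun k => mul_nonneg (mul_nonneg (treeCoeff_nonneg k) (by positivity)) (Real.exp_pos _).le)
        (fun k => ?_) (summable_geometric_of_lt_one (by positivity) hr)
      rw [mul_pow, mul_pow]
      gcongr
      · exact treeCoeff_le k
      · rw [← Real.exp_nat_mul]
        gcongr
        linarith
  have hrow : HasSum (fun k => treeCoeff k * (x * Real.exp (-x)) ^ k) (∑' p, g p) := by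
    refine hsum.hasSum.prod_fiberwise fun k => ?_
    convert! (hexp (-(k * x))).mul_left (treeCoeff k * x ^ k) using 1
    rw [mul_pow, ← Real.exp_nat_mul, mul_assoc]
    ring_nf
  have hdiag : HasSum (fun n : ℕ => if n = 1 then x else 0) (∑' p, g p) := by
    have h := (Finset.HasAntidiagonal.sigmaAntidiagonalEquivProd.hasSum_iff
      (f := g)).2 hsum.hasSum
    refine h.sigma fun n => ?_
    rw [← tree_antidiagonal x n]
    exact Finset.hasSum (antidiagonal n) g
  rwa [hdiag.unique (hasSum_ite_eq 1 x)] at hrow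

/-- The identity `T(x e^{-x}) = x` on `(0, 1)`, by analytic continuation. -/
lemma tree_hasSum {x : ℝ} (hx0 : 0 < x) (hx : x < 1) :
    HasSum (fun k => treeCoeff k * (x * Real.exp (-x)) ^ k) x := by
  set P := FormalMultilinearSeries.ofScalars ℝ treeCoeff with hP
  let r : NNReal := ⟨Real.exp (-1), (Real.exp_pos _).le⟩
  have hr : (r : ENNReal) ≤ P.radius := by
    refine P.le_radius_of_bound 1 fun n => ?_
    rw [FormalMultilinearSeries.ofScalars_norm, Real.norm_of_nonneg (treeCoeff_nonneg n)]
    calc treeCoeff n * Real.exp (-1) ^ n ≤ Real.exp 1 ^ n * Real.exp (-1) ^ n := by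
          gcongr
          exact treeCoeff_le n
      _ = 1 := by rw [← mul_pow, ← Real.exp_add]; simp
  have hr0 : 0 < P.radius :=
    lt_of_lt_of_le (ENNReal.coe_pos.2 (show (0 : ℝ) < Real.exp (-1) from Real.exp_pos _)) hr
  have hball := P.hasFPowerSeriesOnBall hr0
  have hmem : ∀ y ∈ Set.Ioo (0 : ℝ) 1, y * Real.exp (-y) ∈ Metric.eball (0 : ℝ) P.radius := by
    intro y hy
    refine Metric.eball_subset_eball hr ?_
    rw [Metric.eball_coe, mem_ball_zero_iff, Real.norm_of_nonneg
      (mul_nonneg hy.1.le (Real.exp_pos _).le)]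
    change y * Real.exp (-y) < Real.exp (-1)
    -- this is `y < exp (y - 1)`
    have h1 := Real.add_one_lt_exp (x := y - 1) (by linarith [hy.2])
    have h2 : Real.exp (y - 1) * Real.exp (-y) = Real.exp (-1) := by
      rw [← Real.exp_add]; ring_nf
    rw [← h2]
    have := Real.exp_pos (-y)
    gcongr
    linarith
  have hs : ∀ y ∈ Set.Ioo (0 : ℝ) 1,
      HasSum (fun k => treeCoeff k * (y * Real.exp (-y)) ^ k) (P.sum (y * Real.exp (-y))) := by
    intro y hy
    have := P.hasSum (hmem y hy)
    simpa only [hP, FormalMultilinearSeries.ofScalars_apply_eq, smul_eq_mul] using this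
  have hf : AnalyticOnNhd ℝ (fun y : ℝ => P.sum (y * Real.exp (-y))) (Set.Ioo 0 1) := by
    refine hball.analyticOnNhd.comp (g := P.sum) (f := fun y : ℝ => y * Real.exp (-y)) ?_ hmem
    intro y _
    fun_prop
  have heq := hf.eqOn_of_preconnected_of_eventuallyEq (g := fun y => y)
    (fun y _ => analyticAt_id) isPreconnected_Ioo (z₀ := 1 / 10) (by norm_num) (by
      filter_upwards [Ioo_mem_nhds (show (0 : ℝ) < 1 / 10 by norm_num)
        (show (1 / 10 : ℝ) < 1 / 9 by norm_num)] with y hy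
      exact (hs y ⟨hy.1, by linarith [hy.2]⟩).unique (tree_hasSum_small hy.1 hy.2))
  have h := hs x ⟨hx0, hx⟩
  rwa [show P.sum (x * Real.exp (-x)) = x from heq ⟨hx0, hx⟩] at h

/-- `∑_{k≥1} k^{k-1} e^{-k}/k! = 1` (the series converges and its sum is `1`). -/
theorem hasSum_borel_one :
    HasSum (fun k : ℕ =>
      if k = 0 then 0 else (k : ℝ) ^ (k - 1) * Real.exp (-(k : ℝ)) / (Nat.factorial k))
      1 := by
  have hfun : (fun k : ℕ =>
      if k = 0 then 0 else (k : ℝ) ^ (k - 1) * Real.exp (-(k : ℝ)) / (Nat.factorial k)) =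
      fun k => treeCoeff k * Real.exp (-1) ^ k := by
    funext k
    rw [← Real.exp_nat_mul, mul_neg_one, treeCoeff]
    split_ifs <;> ring
  rw [hfun]
  have hnn (k : ℕ) : 0 ≤ treeCoeff k * Real.exp (-1) ^ k :=
    mul_nonneg (treeCoeff_nonneg k) (by positivity)
  have hnear : ∀ᶠ x : ℝ in 𝓝[<] 1, x ∈ Set.Ioo (0 : ℝ) 1 :=
    Ioo_mem_nhdsLT zero_lt_one
  have hpart (s : Finset ℕ) : ∑ k ∈ s, treeCoeff k * Real.exp (-1) ^ k ≤ 1 := by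
    have hc : Continuous fun x : ℝ => ∑ k ∈ s, treeCoeff k * (x * Real.exp (-x)) ^ k := by
      fun_prop
    have ht := (hc.tendsto 1).mono_left (nhdsWithin_le_nhds (s := Set.Iio 1))
    rw [one_mul] at ht
    refine le_of_tendsto ht (hnear.mono fun x hx => ?_)
    refine le_trans (sum_le_hasSum s (fun k _ => ?_) (tree_hasSum hx.1 hx.2)) hx.2.le
    have := hx.1
    exact mul_nonneg (treeCoeff_nonneg k) (by positivity)
  have hsum := summable_of_sum_le hnn hpart
  have hge : 1 ≤ ∑' k, treeCoeff k * Real.exp (-1) ^ k := by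
    refine le_of_tendsto (tendsto_id.mono_left (nhdsWithin_le_nhds (s := Set.Iio (1 : ℝ))))
      (hnear.mono fun x hx => ?_)
    change x ≤ _
    refine hasSum_le (fun k => ?_) (tree_hasSum hx.1 hx.2) hsum.hasSum
    have h0 := hx.1
    have h1 := Real.add_one_le_exp (x - 1)
    have h2 : Real.exp (x - 1) * Real.exp (-x) = Real.exp (-1) := by
      rw [← Real.exp_add]; ring_nf
    have h3 := treeCoeff_nonneg k
    rw [← h2]
    gcongr
    simpa using h1
  have hle := hsum.tsum_le_of_sum_le hpart
  exact hsum.hasSum_iff.2 (le_antisymm hle hge)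
end

section
/- For every integer b ≥ 2, 2(b−1)·b^{b−2} = ∑_{c=1}^{b−1} binom(b,c) · c^{c−1} · (b−c)^{b−c−1}. -/
/-!
Multiplying by `b = c + (b - c)` and using the symmetry `c ↔ b - c`, the claim reduces to
`∑_{c=1}^{b} C(b,c) c^{c-1} (b-c)^{b-c} = b^b`, where the term `c = b` contributes `b^{b-1}`.
This is the value at `X = b` of the Abel-type polynomial identity
`∑_{c=1}^{b} C(b,c) c^{c-1} (X-c)^{b-c} = b X^{b-1}` (`abel_polynomial`), proved by induction on
`b`: the derivative of the identity for `b` is `b` times the identity for `b - 1`, and at `X = 0`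
the left-hand side is, up to sign, the `b`-th finite difference of `x^{b-1}`, hence zero
(`abel_at_zero`).
-/

/-- The constant term of the Abel-type identity: up to sign a finite difference of order `n + 2`
of a power of degree `n + 1`. -/
lemma abel_at_zero (n : ℕ) :
    ∑ j ∈ Finset.range (n + 2), ((n + 2).choose (j + 1) : ℚ) * ((j : ℚ) + 1) ^ j *
      (0 - ((j : ℚ) + 1)) ^ (n + 1 - j) = 0 := by
  have h := congrFun (fwdDiff_iter_pow_eq_zero_of_lt (R := ℚ) (Nat.lt_succ_self (n + 1))) 0
  rw [fwdDiff_iter_eq_sum_shift, Finset.sum_range_succ'] at h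
  simp only [Nat.succ_eq_add_one, zero_smul, add_zero, ne_eq, Nat.add_eq_zero_iff, one_ne_zero,
    and_false, not_false_eq_true, zero_pow, smul_zero, Pi.zero_apply] at h
  refine Eq.trans ?_ h
  refine Finset.sum_congr rfl fun j hj => ?_
  have hj' : j ≤ n + 1 := by simpa [Nat.lt_succ_iff] using hj
  obtain ⟨m, hm⟩ := Nat.exists_eq_add_of_le hj'
  have e1 : n + 1 - j = m := by omega
  have e2 : n + 1 + 1 - (j + 1) = m := by omega
  rw [e1, e2, show n + 2 = j + m + 1 by omega, hm, zero_sub, neg_pow]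
  simp only [zsmul_eq_mul, nsmul_eq_mul]
  push_cast
  ring

open Polynomial in
/-- The identity `∑_{c=1}^{b} C(b,c) c^{c-1} (X-c)^{b-c} = b X^{b-1}`, indexed by `b = n + 1` and
`c = j + 1`. -/
lemma abel_polynomial (n : ℕ) :
    ∑ j ∈ Finset.range (n + 1), C (((n + 1).choose (j + 1) : ℚ) * ((j : ℚ) + 1) ^ j) *
      (X - C ((j : ℚ) + 1)) ^ (n - j) = C ((n : ℚ) + 1) * X ^ n := by
  induction n with
  | zero => simp
  | succ n ih =>
    rw [← sub_eq_zero]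
    set P : ℚ[X] := _ - _ with hP
    have hd : derivative P = 0 := by
      rw [hP, derivative_sub, derivative_sum, Finset.sum_range_succ, sub_eq_zero]
      have hR : derivative (C (((n + 1 : ℕ) : ℚ) + 1) * X ^ (n + 1)) =
          C ((n : ℚ) + 2) * (C ((n : ℚ) + 1) * X ^ n) := by
        rw [derivative_C_mul, derivative_X_pow]
        push_cast
        simp only [C_add, C_1, map_natCast, map_ofNat]
        ring
      rw [hR, ← ih, Finset.mul_sum]
      simp only [tsub_self, pow_zero, mul_one, derivative_C, add_zero]
      refine Finset.sum_congr rfl fun j hj => ?_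
      have hj' : j ≤ n := by simpa [Nat.lt_succ_iff] using hj
      obtain ⟨m, rfl⟩ := Nat.exists_eq_add_of_le hj'
      have e1 : j + m + 1 - j = m + 1 := by omega
      have e2 : j + m - j = m := by omega
      have hc : ((j + m + 1 + 1).choose (j + 1) : ℚ) * ((m : ℚ) + 1) =
          (((j + m : ℕ) : ℚ) + 2) * ((j + m + 1).choose (j + 1) : ℚ) := by
        have := Nat.choose_mul_succ_eq (j + m + 1) (j + 1)
        rw [show j + m + 1 + 1 - (j + 1) = m + 1 by omega] at this
        have h' := congrArg (Nat.cast : ℕ → ℚ) this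
        push_cast at h' ⊢
        linarith
      have hc' := congrArg (C : ℚ → ℚ[X]) hc
      rw [C_mul, C_mul] at hc'
      rw [e1, e2, derivative_C_mul, derivative_X_sub_C_pow, add_tsub_cancel_right, C_mul, C_mul,
        Nat.cast_add_one]
      linear_combination C (((j : ℚ) + 1) ^ j) * (X - C ((j : ℚ) + 1)) ^ m * hc'
    have h0 : P.eval 0 = 0 := by
      have := abel_at_zero n
      simpa [hP, eval_finsetSum] using this
    have hC := eq_C_of_natDegree_eq_zero (derivative_eq_zero.1 hd)
    rw [hC, eval_C] at h0
    rw [hC, h0, C_0]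

/-- The case `X = b = n + 2` of `abel_polynomial`, with the term `c = b` split off. -/
lemma abel_half_sum (n : ℕ) :
    ∑ j ∈ Finset.range (n + 1), (n + 2).choose (j + 1) * (j + 1) ^ j *
      (n + 1 - j) ^ (n + 1 - j) = (n + 1) * (n + 2) ^ (n + 1) := by
  have h := congrArg (Polynomial.eval ((n : ℚ) + 2)) (abel_polynomial (n + 1))
  rw [Polynomial.eval_finsetSum, Finset.sum_range_succ] at h
  simp only [Polynomial.eval_mul, Polynomial.eval_C, Polynomial.eval_pow, Polynomial.eval_sub,
    Polynomial.eval_X, tsub_self, pow_zero, mul_one, Nat.choose_self] at h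
  have h2 : ((∑ j ∈ Finset.range (n + 1), (n + 2).choose (j + 1) * (j + 1) ^ j *
      (n + 1 - j) ^ (n + 1 - j) : ℕ) : ℚ) = (n + 1) * (n + 2) ^ (n + 1) := by
    have e : ((∑ j ∈ Finset.range (n + 1), (n + 2).choose (j + 1) * (j + 1) ^ j *
      (n + 1 - j) ^ (n + 1 - j) : ℕ) : ℚ) = ∑ j ∈ Finset.range (n + 1),
        ((n + 1 + 1).choose (j + 1) : ℚ) * ((j : ℚ) + 1) ^ j *
          ((n : ℚ) + 2 - ((j : ℚ) + 1)) ^ (n + 1 - j) := by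
      rw [Nat.cast_sum]
      refine Finset.sum_congr rfl fun j hj => ?_
      have hj' : j ≤ n + 1 := by have := Finset.mem_range.1 hj; omega
      push_cast [Nat.cast_sub hj']
      ring
    rw [e, eq_sub_of_add_eq h]
    push_cast
    ring
  exact_mod_cast h2

/-- For every integer `b ≥ 2`,
`2(b-1) b^{b-2} = ∑_{c=1}^{b-1} C(b,c) c^{c-1} (b-c)^{b-c-1}`. -/
theorem oriented_edge_tree_identity (b : ℕ) (hb : 2 ≤ b) :
    2 * (b - 1) * b ^ (b - 2) =
      ∑ c ∈ Finset.Icc 1 (b - 1),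
        Nat.choose b c * c ^ (c - 1) * (b - c) ^ (b - c - 1) := by
  obtain ⟨n, rfl⟩ := Nat.exists_eq_add_of_le' hb
  have hS : ∑ c ∈ Finset.Icc 1 (n + 2 - 1),
        Nat.choose (n + 2) c * c ^ (c - 1) * (n + 2 - c) ^ (n + 2 - c - 1) =
      ∑ j ∈ Finset.range (n + 1), (n + 2).choose (j + 1) * (j + 1) ^ j *
        (n + 1 - j) ^ (n - j) := by
    rw [show Finset.Icc 1 (n + 2 - 1) = Finset.Ico 1 (n + 2) by ext; simp; omega,
      Finset.sum_Ico_eq_sum_range]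
    refine Finset.sum_congr (by simp) fun j hj => ?_
    rw [show 1 + j = j + 1 by omega, show n + 2 - (j + 1) = n + 1 - j by omega,
      show n + 1 - j - 1 = n - j by omega, show j + 1 - 1 = j by omega]
  rw [hS]
  apply Nat.eq_of_mul_eq_mul_left (show 0 < n + 2 by omega)
  -- `(n + 2) = (j + 1) + (n + 1 - j)`; both halves equal the sum in `abel_half_sum`.
  have hA : ∑ j ∈ Finset.range (n + 1), (n + 1 - j) * ((n + 2).choose (j + 1) * (j + 1) ^ j *
        (n + 1 - j) ^ (n - j)) = (n + 1) * (n + 2) ^ (n + 1) := by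
    rw [← abel_half_sum]
    refine Finset.sum_congr rfl fun j hj => ?_
    have : n + 1 - j = n - j + 1 := by have := Finset.mem_range.1 hj; omega
    rw [this, pow_succ]
    ring
  have hB : ∑ j ∈ Finset.range (n + 1), (j + 1) * ((n + 2).choose (j + 1) * (j + 1) ^ j *
        (n + 1 - j) ^ (n - j)) = (n + 1) * (n + 2) ^ (n + 1) := by
    rw [← hA, ← Finset.sum_range_reflect]
    refine Finset.sum_congr rfl fun j hj => ?_
    have hj' := Finset.mem_range.1 hj
    rw [show n + 1 - 1 - j + 1 = n + 1 - j by omega, show n + 1 - 1 - j = n - j by omega,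
      show n + 1 - (n - j) = j + 1 by omega, show n - (n - j) = j by omega,
      ← Nat.choose_symm_of_eq_add (show n + 2 = (j + 1) + (n + 1 - j) by omega)]
    ring
  have hsplit : (n + 2) * ∑ j ∈ Finset.range (n + 1), (n + 2).choose (j + 1) * (j + 1) ^ j *
        (n + 1 - j) ^ (n - j) = (n + 1) * (n + 2) ^ (n + 1) + (n + 1) * (n + 2) ^ (n + 1) := by
    nth_rewrite 1 [← hB]
    rw [← hA, ← Finset.sum_add_distrib, Finset.mul_sum]
    refine Finset.sum_congr rfl fun j hj => ?_
    have hj' := Finset.mem_range.1 hj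
    rw [← add_mul, show j + 1 + (n + 1 - j) = n + 2 by omega]
  rw [hsplit, show n + 2 - 1 = n + 1 by omega, show n + 2 - 2 = n by omega]
  ring
end

section
/- For every integer b ≥ 2, (b−1)·b^{b−1} = ∑_{c=1}^{b−1} binom(b,c) · c^{c} · (b−c)^{b−c−1}. -/
/-!
Substituting `k = b - c` and adding the term `k = b`, which equals `b ^ (b - 1)`, the claim becomes
the Abel-type identity `∑_{k=1}^n C(n,k) k^(k-1) (n-k)^(n-k) = n ^ n` (`abel_sum`).

To prove it over `ℤ`, expand `(n - k)^(n - k)` by the binomial theorem in powers `n ^ j`. Since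
`C(n,k) C(n-k,j) = C(n,j) C(n-j,k)`, with `m = n - j` the coefficient of `n ^ j` is
`C(n,j) ∑_{k=1}^m (-1)^(m-k) C(m,k) k^(m-1)`. The inner sum is the `m`-th finite difference at `0`
of a polynomial of degree `m - 1`, so it vanishes for `m ≥ 2` (`alternating_sum_eq_zero`).
Only `m = 1` survives, contributing `C(n, n-1) n^(n-1) = n ^ n`.
-/

theorem alternating_sum_eq_zero (n m : ℕ) (hm : 2 ≤ m) (hmn : m ≤ n) :
    ∑ k ∈ Finset.Icc 1 n, (-1 : ℤ) ^ (m - k) * (m.choose k : ℤ) * (k : ℤ) ^ (m - 1) = 0 := by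
  have h := fwdDiff_iter_eq_sum_shift (1 : ℤ) (fun x : ℤ => x ^ (m - 1)) m 0
  rw [fwdDiff_iter_pow_eq_zero_of_lt (by omega)] at h
  simp only [Pi.zero_apply, zero_add, smul_eq_mul, nsmul_eq_mul, mul_one] at h
  rw [h]
  symm
  -- The index `k = 0` contributes `0 ^ (m - 1) = 0`, and indices `k > m` have `C(m,k) = 0`.
  rw [← Finset.sum_subset (s₁ := Finset.Icc 1 m)]
  · symm
    rw [← Finset.sum_subset (s₁ := Finset.Icc 1 m)]
    · intro k hk
      simp only [Finset.mem_Icc] at hk ⊢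
      omega
    · intro k hk hk'
      simp only [Finset.mem_Icc] at hk hk'
      rw [Nat.choose_eq_zero_of_lt (by omega)]
      simp
  · intro k hk
    simp only [Finset.mem_Icc, Finset.mem_range] at hk ⊢
    omega
  · intro k hk hk'
    simp only [Finset.mem_Icc, Finset.mem_range] at hk hk'
    obtain rfl : k = 0 := by omega
    have : m - 1 ≠ 0 := by omega
    simp [this]

/-- The binomial expansion of one summand in powers of `n`. The range of `j` is extended from
`j ≤ n - k` to `j < n`, the additional terms being zero. -/
theorem abel_term (n k : ℕ) (hk : 1 ≤ k) (hkn : k ≤ n) :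
    (n.choose k : ℤ) * (k : ℤ) ^ (k - 1) * ((n : ℤ) - k) ^ (n - k) =
      ∑ j ∈ Finset.range n, (n : ℤ) ^ j * (n.choose j : ℤ) *
        ((-1 : ℤ) ^ (n - j - k) * ((n - j).choose k : ℤ) * (k : ℤ) ^ (n - j - 1)) := by
  rw [sub_eq_add_neg, add_pow, Finset.mul_sum]
  rw [← Finset.sum_subset (s₁ := Finset.range (n - k + 1)) (s₂ := Finset.range n)]
  · refine Finset.sum_congr rfl fun j hj => ?_
    have hj' : j + k ≤ n := by
      simp only [Finset.mem_range] at hj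
      omega
    have hc : (n.choose k : ℤ) * ((n - k).choose j : ℤ) =
        (n.choose j : ℤ) * ((n - j).choose k : ℤ) := by
      have h1 := Nat.choose_mul (n := n) (k := j + k) (s := k) (by omega)
      have h2 := Nat.choose_mul (n := n) (k := j + k) (s := j) (by omega)
      have h3 := Nat.choose_symm_add (a := j) (b := k)
      simp only [Nat.add_sub_cancel, Nat.add_sub_cancel_left] at h1 h2
      rw [h3, h1] at h2
      exact_mod_cast h2
    have hp : (k : ℤ) ^ (n - j - 1) = (k : ℤ) ^ (k - 1) * (k : ℤ) ^ (n - k - j) := by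
      rw [← pow_add]
      congr 1
      omega
    have he : n - j - k = n - k - j := by omega
    rw [hp, he, neg_pow (k : ℤ)]
    linear_combination ((k : ℤ) ^ (k - 1) * (n : ℤ) ^ j * (-1) ^ (n - k - j) *
      (k : ℤ) ^ (n - k - j)) * hc
  · intro j hj
    simp only [Finset.mem_range] at hj ⊢
    omega
  · intro j hj hj'
    simp only [Finset.mem_range] at hj hj'
    rw [Nat.choose_eq_zero_of_lt (n := n - j) (by omega)]
    simp

theorem abel_sum (n : ℕ) (hn : 1 ≤ n) :
    ∑ k ∈ Finset.Icc 1 n, (n.choose k : ℤ) * (k : ℤ) ^ (k - 1) * ((n : ℤ) - k) ^ (n - k) =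
      (n : ℤ) * (n : ℤ) ^ (n - 1) := by
  rw [Finset.sum_congr rfl fun k hk =>
    abel_term n k (Finset.mem_Icc.1 hk).1 (Finset.mem_Icc.1 hk).2, Finset.sum_comm]
  simp only [← Finset.mul_sum]
  rw [Finset.sum_eq_single (n - 1)]
  · have h1 : n - (n - 1) = 1 := by omega
    have h2 : n.choose (n - 1) = n := by
      rw [Nat.choose_symm hn, Nat.choose_one_right]
    rw [h1, h2, Finset.sum_eq_single 1]
    · simp [mul_comm]
    · intro k hk hk'
      simp only [Finset.mem_Icc] at hk
      rw [Nat.choose_eq_zero_of_lt (by omega)]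
      simp
    · intro h
      simp [hn] at h
  · intro j hj hj'
    simp only [Finset.mem_range] at hj
    rw [alternating_sum_eq_zero n (n - j) (by omega) (by omega), mul_zero]
  · intro h
    simp only [Finset.mem_range] at h
    omega

/-- For every integer `b ≥ 2`,
`(b-1) b^{b-1} = ∑_{c=1}^{b-1} C(b,c) c^c (b-c)^{b-c-1}`. -/
theorem tree_identity_cc (b : ℕ) (hb : 2 ≤ b) :
    (b - 1) * b ^ (b - 1) =
      ∑ c ∈ Finset.Icc 1 (b - 1),
        Nat.choose b c * c ^ c * (b - c) ^ (b - c - 1) := by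
  have h := abel_sum b (by omega)
  obtain ⟨m, rfl⟩ : ∃ m, b = m + 1 := ⟨b - 1, by omega⟩
  rw [Finset.sum_Icc_succ_top (by omega)] at h
  simp only [Nat.add_sub_cancel] at h ⊢
  have hr : ∑ c ∈ Finset.Icc 1 m, Nat.choose (m + 1) c * c ^ c * (m + 1 - c) ^ (m + 1 - c - 1) =
      ∑ k ∈ Finset.Icc 1 m, Nat.choose (m + 1) k * k ^ (k - 1) * (m + 1 - k) ^ (m + 1 - k) := by
    refine Finset.sum_bij' (fun c _ => m + 1 - c) (fun c _ => m + 1 - c) ?_ ?_ ?_ ?_ ?_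
    · intro c hc
      simp only [Finset.mem_Icc] at hc ⊢
      omega
    · intro c hc
      simp only [Finset.mem_Icc] at hc ⊢
      omega
    · intro c hc
      simp only [Finset.mem_Icc] at hc
      omega
    · intro c hc
      simp only [Finset.mem_Icc] at hc
      omega
    · intro c hc
      simp only [Finset.mem_Icc] at hc
      have h1 : m + 1 - (m + 1 - c) = c := by omega
      rw [h1, Nat.choose_symm (by omega)]
      ring
  rw [hr]
  zify
  have hs : ∀ k ∈ Finset.Icc 1 m,
      ((m + 1).choose k : ℤ) * (k : ℤ) ^ (k - 1) * ((m + 1 - k : ℕ) : ℤ) ^ (m + 1 - k) =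
      ((m + 1).choose k : ℤ) * (k : ℤ) ^ (k - 1) * (((m + 1 : ℕ) : ℤ) - k) ^ (m + 1 - k) := by
    intro k hk
    simp only [Finset.mem_Icc] at hk
    rw [Nat.cast_sub (by omega)]
  rw [Finset.sum_congr rfl hs]
  simp only [Nat.choose_self, Nat.sub_self, pow_zero, Nat.cast_one] at h
  push_cast at h ⊢
  linear_combination -h
end

section
/- Asymptotically almost surely, the number of subtrees of a uniformly random labelled tree on n vertices is at most 1.89756^n; that is, the probability that c(𝒯_n) ≤ 1.89756^n tends to 1 as n → ∞. -/
/-!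
The proof is a first moment argument. A pair `(T, S)` of a labelled tree on `n` vertices and a
subtree `S` with `k` vertices is encoded by `S` and a parent map of `T` rooted inside `S`; this map
sends `S` into `S`, because `S` is connected (`exists_parentMap`). Hence there are at most
`∑ k, n.choose k * k ^ k * n ^ (n - k)` such pairs (`sum_subtreeCount_le`), and each term is at most
`n ^ n * 1.65 ^ n` (`choose_term_le`).

On the other hand there are at least `n ^ (n - 2)` labelled trees (`cayley_lower`). This half of
Cayley's formula follows from Pitman's double counting: comparing the numbers of rooted forests with
`j` and `j + 1` edges (`forests_step`) shows that there are at least `n ^ (n - 1)` rooted trees.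

So the expected number of subtrees is at most `(n + 1) * n ^ 2 * 1.65 ^ n`, and by Markov's
inequality the probability of more than `1.89756 ^ n` subtrees tends to `0`.
-/

open Filter Topology

/-- The number of subtrees of a graph `G` on `Fin n`: the number of (nonempty) vertex
subsets inducing a connected subgraph. -/
noncomputable def subtreeCount {n : ℕ} (G : SimpleGraph (Fin n)) : ℕ :=
  Nat.card {S : Set (Fin n) // (G.induce S).Connected}

/-! ### The lower bound in Cayley's formula -/

/-- A rooted forest on `V`, encoded by its parent map: `p x` is the parent of `x`, and the roots
are the fixed points of `p`. Acyclicity is expressed by a height that drops along every edge. -/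
def IsForest {V : Type*} (p : V → V) : Prop :=
  ∃ h : V → ℕ, ∀ x, p x ≠ x → h (p x) < h x

/-- The graph with an edge between each non-fixed point `x` of `p` and its image `p x`. -/
def parentGraph {V : Type*} (p : V → V) : SimpleGraph V :=
  SimpleGraph.fromRel (fun x y => p x = y)

lemma parentGraph_adj {V : Type*} (p : V → V) (x y : V) :
    (parentGraph p).Adj x y ↔ x ≠ y ∧ (p x = y ∨ p y = x) := by
  simp [parentGraph]

/-- In a rooted forest every vertex `x` has a well-defined root `ρ x`, constant along edges: a
sufficiently high iterate of the parent map. -/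
lemma exists_root {V : Type*} [Fintype V] (p : V → V) (h : V → ℕ)
    (hp : ∀ x, p x ≠ x → h (p x) < h x) :
    ∃ ρ : V → V, (∀ x, ρ (p x) = ρ x) ∧ (∀ x, p (ρ x) = ρ x) ∧ ∀ x, p x = x → ρ x = x := by
  have key : ∀ m x, h x ≤ m → p (p^[m] x) = p^[m] x := by
    intro m
    induction m with
    | zero =>
      intro x hx
      by_contra hne
      have := hp x hne
      omega
    | succ m ih =>
      intro x hx
      by_cases hne : p x = x
      · rw [Function.iterate_fixed hne, hne]
      · rw [Function.iterate_succ_apply]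
        exact ih _ (by have := hp x hne; omega)
  have hM : ∀ x, h x ≤ ∑ y, h y := fun x =>
    Finset.single_le_sum (f := h) (fun _ _ => Nat.zero_le _) (Finset.mem_univ x)
  refine ⟨p^[∑ y, h y], fun x => ?_, fun x => key _ x (hM x), fun x hx =>
    Function.iterate_fixed hx _⟩
  rw [← Function.iterate_succ_apply, Function.iterate_succ_apply', key _ x (hM x)]

/-- Hanging a root `r` below a vertex `v` of another tree of the forest yields a forest: the
heights in the tree of `r` are raised above that of `v`. -/
lemma IsForest.update {V : Type*} [DecidableEq V] {p : V → V} {h : V → ℕ}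
    (hp : ∀ x, p x ≠ x → h (p x) < h x) {ρ : V → V} (hρ : ∀ x, ρ (p x) = ρ x)
    (hfix : ∀ x, p x = x → ρ x = x) {r v : V} (hr : p r = r) (hv : ρ v ≠ r) :
    IsForest (Function.update p r v) := by
  refine ⟨fun x => if ρ x = r then h x + h v + 1 else h x, fun x hx => ?_⟩
  by_cases hxr : x = r
  · subst hxr
    simp [hv, hfix x hr]
  · rw [Function.update_of_ne hxr] at hx ⊢
    have := hp x hx
    simp only [hρ]
    split_ifs <;> omega

open Classical in
/-- The rooted forests on `V` with exactly `j` edges, that is, `j` non-roots. -/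
noncomputable def forests (V : Type*) [Fintype V] (j : ℕ) : Finset (V → V) :=
  {p | IsForest p ∧ (Finset.univ.filter (fun x => p x ≠ x)).card = j}

open Classical in
/-- Pitman's double counting. From a forest with `j` edges, hence `|V| - j` roots, hang a root `r`
below a vertex `v` of another tree: there are `|V|` choices of `v` and then `|V| - j - 1` choices
of `r`. The resulting forest together with `r`, one of its `j + 1` non-roots, determines the
original forest and `v`. -/
lemma forests_step (V : Type*) [Fintype V] (j : ℕ) :
    (forests V j).card * (Fintype.card V * (Fintype.card V - 1 - j)) ≤
      (forests V (j + 1)).card * (j + 1) := by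
  set A : Finset (Σ _ : V → V, Σ _ : V, V) := (forests V j).sigma fun p =>
    Finset.univ.sigma fun v => {r | p r = r ∧ v ≠ r ∧ IsForest (Function.update p r v)} with hA
  set B : Finset (Σ _ : V → V, V) := (forests V (j + 1)).sigma fun p => {r | p r ≠ r} with hB
  have hBc : B.card = (forests V (j + 1)).card * (j + 1) := by
    rw [hB, Finset.card_sigma, Finset.sum_const_nat]
    intro p hp
    simp only [forests, Finset.mem_filter] at hp
    exact hp.2.2
  have hAc : (forests V j).card * (Fintype.card V * (Fintype.card V - 1 - j)) ≤ A.card := by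
    rw [hA, Finset.card_sigma, ← smul_eq_mul]
    refine Finset.card_nsmul_le_sum _ _ _ fun p hp => ?_
    rw [Finset.card_sigma, ← smul_eq_mul]
    refine Finset.card_nsmul_le_sum _ _ _ fun v _ => ?_
    simp only [forests, Finset.mem_filter] at hp
    obtain ⟨-, ⟨h, hh⟩, hc⟩ := hp
    obtain ⟨ρ, h1, h2, h3⟩ := exists_root p h hh
    have hcard : ((Finset.univ.filter (fun r => p r = r)).erase (ρ v)).card =
        Fintype.card V - 1 - j := by
      rw [Finset.card_erase_of_mem (by simp [h2])]
      have := Finset.card_filter_add_card_filter_not (s := (Finset.univ : Finset V)) (fun r => p r = r)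
      rw [Finset.card_univ] at this
      simp only [ne_eq] at hc
      omega
    rw [← hcard]
    refine Finset.card_le_card fun r hr => ?_
    simp only [Finset.mem_erase, Finset.mem_filter, Finset.mem_univ, true_and] at hr ⊢
    refine ⟨hr.2, ?_, IsForest.update hh h1 h3 hr.2 (Ne.symm hr.1)⟩
    rintro rfl
    exact hr.1 (h3 _ hr.2).symm
  rw [← hBc]
  refine hAc.trans (Finset.card_le_card_of_injOn
    (fun t => ⟨Function.update t.1 t.2.2 t.2.1, t.2.2⟩) ?_ ?_)
  · rintro ⟨p, v, r⟩ ht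
    simp only [hA, hB, Finset.mem_coe, Finset.mem_sigma, forests, Finset.mem_filter,
      Finset.mem_univ, true_and] at ht ⊢
    obtain ⟨⟨_, hc⟩, hr, hv, hf⟩ := ht
    refine ⟨⟨hf, ?_⟩, by simpa using hv⟩
    rw [← hc, ← Finset.card_insert_of_notMem (s := Finset.univ.filter (fun x => p x ≠ x)) (a := r)
      (by simpa using hr)]
    congr 1
    ext x
    by_cases hx : x = r
    · subst hx; simp [hv]
    · simp [hx]
  · rintro ⟨p, v, r⟩ ht ⟨p', v', r'⟩ ht' he
    simp only [hA, Finset.mem_coe, Finset.mem_sigma, Finset.mem_filter,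
      Finset.mem_univ, true_and] at ht ht'
    simp only [Sigma.mk.injEq, heq_eq_eq] at he
    obtain ⟨he, rfl⟩ := he
    have hv : v = v' := by simpa using congrFun he r
    subst hv
    have : p = p' := by
      funext x
      by_cases hx : x = r
      · subst hx; rw [ht.2.1, ht'.2.1]
      · simpa [hx] using congrFun he x
    rw [this]

lemma le_card_forests (V : Type*) [Fintype V] (j : ℕ) :
    Fintype.card V ^ j * (Fintype.card V - 1).descFactorial j ≤
      (forests V j).card * j.factorial := by
  classical
  induction j with
  | zero =>
    simp only [pow_zero, Nat.descFactorial_zero, mul_one, Nat.factorial_zero]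
    refine Finset.card_pos.2 ⟨id, ?_⟩
    simp [forests, IsForest]
  | succ j ih =>
    have := forests_step V j
    rw [Nat.descFactorial_succ, Nat.factorial_succ, pow_succ]
    calc _ = (Fintype.card V ^ j * (Fintype.card V - 1).descFactorial j) *
          (Fintype.card V * (Fintype.card V - 1 - j)) := by ring
      _ ≤ ((forests V j).card * j.factorial) * (Fintype.card V * (Fintype.card V - 1 - j)) := by
          gcongr
      _ = ((forests V j).card * (Fintype.card V * (Fintype.card V - 1 - j))) * j.factorial := by
          ring
      _ ≤ ((forests V (j + 1)).card * (j + 1)) * j.factorial := by gcongr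
      _ = _ := by ring

lemma pow_le_card_rootedTrees (V : Type*) [Fintype V] :
    Fintype.card V ^ (Fintype.card V - 1) ≤ (forests V (Fintype.card V - 1)).card := by
  have := le_card_forests V (Fintype.card V - 1)
  rw [Nat.descFactorial_self] at this
  exact Nat.le_of_mul_le_mul_right this (Nat.factorial_pos _)

/-- A rooted forest is determined by its underlying graph and its roots. If `p x ≠ q x`, then the
edge from `x` to `p x` is traversed in the opposite direction by `q`, so `p` and `q` also differ at
`p x`, which has smaller height. -/
lemma IsForest.eq_of_parentGraph_eq {V : Type*} {p q : V → V} (hp : IsForest p)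
    (hG : parentGraph p = parentGraph q) (hfix : ∀ x, p x = x ↔ q x = x) : p = q := by
  obtain ⟨h, hh⟩ := hp
  have key : ∀ m x, h x ≤ m → p x = q x := by
    intro m
    induction m with
    | zero =>
      intro x hx
      by_cases hpx : p x = x
      · rw [hpx, (hfix x).1 hpx]
      · have := hh x hpx
        omega
    | succ m ih =>
      intro x hx
      by_cases hpx : p x = x
      · rw [hpx, (hfix x).1 hpx]
      · have hlt := hh x hpx
        have hadj : (parentGraph q).Adj x (p x) := by
          rw [← hG, parentGraph_adj]
          exact ⟨Ne.symm hpx, Or.inl rfl⟩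
        rw [parentGraph_adj] at hadj
        rcases hadj.2 with h1 | h1
        · exact h1.symm
        · exfalso
          rw [← ih (p x) (by omega)] at h1
          by_cases h2 : p (p x) = p x
          · exact hpx (h2.symm.trans h1)
          · have := hh _ h2
            rw [h1] at this
            omega
  exact funext fun x => key _ x le_rfl

lemma edgeSet_parentGraph_subset {V : Type*} [Fintype V] [DecidableEq V] (p : V → V) :
    (parentGraph p).edgeSet ⊆
      ((Finset.univ.filter (fun x => p x ≠ x)).image (fun x => s(x, p x)) : Finset (Sym2 V)) := by
  intro e
  induction e with
  | _ x y =>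
    rw [SimpleGraph.mem_edgeSet, parentGraph_adj]
    rintro ⟨hne, h | h⟩
    · simp only [Finset.coe_image, Set.mem_image, Finset.mem_coe, Finset.mem_filter]
      exact ⟨x, ⟨Finset.mem_univ _, by rw [h]; exact hne.symm⟩, by rw [h]⟩
    · simp only [Finset.coe_image, Set.mem_image, Finset.mem_coe, Finset.mem_filter]
      exact ⟨y, ⟨Finset.mem_univ _, by rw [h]; exact hne⟩, by rw [h, Sym2.eq_swap]⟩

lemma isTree_parentGraph {V : Type*} [Fintype V] {p : V → V} (hp : IsForest p) {r : V}
    (hr : ∀ x, p x = x ↔ x = r) : (parentGraph p).IsTree := by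
  classical
  obtain ⟨h, hh⟩ := hp
  -- The graph is connected and has at most `|V| - 1` edges.
  have hreach : ∀ m x, h x ≤ m → (parentGraph p).Reachable x r := by
    intro m
    induction m with
    | zero =>
      intro x hx
      by_cases hpx : p x = x
      · rw [(hr x).1 hpx]
      · have := hh x hpx
        omega
    | succ m ih =>
      intro x hx
      by_cases hpx : p x = x
      · rw [(hr x).1 hpx]
      · have hlt := hh x hpx
        have hadj : (parentGraph p).Adj x (p x) := by
          rw [parentGraph_adj]
          exact ⟨Ne.symm hpx, Or.inl rfl⟩
        exact hadj.reachable.trans (ih _ (by omega))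
  have hconn : (parentGraph p).Connected :=
    { preconnected := fun x y => (hreach _ x le_rfl).trans (hreach _ y le_rfl).symm
      nonempty := ⟨r⟩ }
  rw [SimpleGraph.isTree_iff_connected_and_card]
  refine ⟨hconn, le_antisymm ?_ hconn.card_vert_le_card_edgeSet_add_one⟩
  have h1 : Nat.card (parentGraph p).edgeSet ≤
      (Finset.univ.filter (fun x => p x ≠ x)).card := by
    refine le_trans ?_ (Finset.card_image_le (f := fun x => s(x, p x)))
    rw [← Set.ncard_coe_finset]
    exact Set.ncard_le_ncard (edgeSet_parentGraph_subset p) (Finset.finite_toSet _)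
  have h2 : (Finset.univ.filter (fun x => p x ≠ x)) = Finset.univ.erase r := by
    ext x; simp [hr]
  rw [h2, Finset.card_erase_of_mem (Finset.mem_univ _), Finset.card_univ] at h1
  have : 0 < Fintype.card V := Fintype.card_pos_iff.2 ⟨r⟩
  rw [Nat.card_eq_fintype_card (α := V)]
  omega

/-- The lower bound `n ^ (n - 1) ≤ n * t` in Cayley's formula, where `t` is the number of labelled
trees on `n` vertices. -/
lemma cayley_lower (V : Type*) [Fintype V] [Nonempty V] :
    Fintype.card V ^ (Fintype.card V - 1) ≤
      Nat.card {G : SimpleGraph V // G.IsTree} * Fintype.card V := by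
  classical
  refine (pow_le_card_rootedTrees V).trans ?_
  have hroot : ∀ p : forests V (Fintype.card V - 1), ∃ r, ∀ x, p.1 x = x ↔ x = r := by
    rintro ⟨p, hp⟩
    simp only [forests, Finset.mem_filter] at hp
    obtain ⟨-, -, hc⟩ := hp
    have := Finset.card_filter_add_card_filter_not (s := (Finset.univ : Finset V)) (fun r => p r = r)
    rw [Finset.card_univ] at this
    simp only [ne_eq] at hc
    have hpos : 0 < Fintype.card V := Fintype.card_pos
    obtain ⟨r, hr⟩ := Finset.card_eq_one.1
      (show (Finset.univ.filter (fun r => p r = r)).card = 1 by omega)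
    refine ⟨r, fun x => ?_⟩
    simpa using Finset.ext_iff.1 hr x
  choose root hroot using hroot
  have hfor : ∀ p : forests V (Fintype.card V - 1), IsForest p.1 := by
    rintro ⟨p, hp⟩
    simp only [forests, Finset.mem_filter] at hp
    exact hp.2.1
  let φ : forests V (Fintype.card V - 1) → {G : SimpleGraph V // G.IsTree} × V :=
    fun p => (⟨parentGraph p.1, isTree_parentGraph (hfor p) (hroot p)⟩, root p)
  have hφ : Function.Injective φ := by
    intro p q hpq
    simp only [φ, Prod.mk.injEq, Subtype.mk.injEq] at hpq
    exact Subtype.ext ((hfor p).eq_of_parentGraph_eq hpq.1 fun x => by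
      rw [hroot, hroot, hpq.2])
  have := Nat.card_le_card_of_injective φ hφ
  rwa [Nat.card_prod, Nat.card_eq_fintype_card, Fintype.card_coe,
    Nat.card_eq_fintype_card (α := V)] at this

/-! ### Counting pairs of a tree and a subtree -/

lemma exists_adj_dist_lt {V : Type*} {H : SimpleGraph V} (hH : H.Connected) {x r : V}
    (hx : x ≠ r) : ∃ y, H.Adj x y ∧ H.dist y r < H.dist x r := by
  obtain ⟨w, hw⟩ := (hH.preconnected x r).exists_walk_length_eq_dist
  cases w with
  | nil => exact absurd rfl hx
  | cons hadj w' =>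
    refine ⟨_, hadj, ?_⟩
    have := SimpleGraph.dist_le w'
    rw [← hw, SimpleGraph.Walk.length_cons]
    omega

/-- A tree `G` with a connected vertex set `S` is the graph of a map preserving `S`: fix a root
`r ∈ S`, and send each other vertex to a neighbour nearer to `r`, where vertices of `S` choose their
neighbour within `S` and measure distance in `G.induce S`. No edge is chosen from both its
ends, so the `n - 1` chosen edges are all edges of `G`. -/
lemma exists_parentMap {V : Type*} [Fintype V] {G : SimpleGraph V} (hG : G.IsTree)
    {S : Set V} (hS : (G.induce S).Connected) :
    ∃ f : V → V, parentGraph f = G ∧ ∀ x ∈ S, f x ∈ S := by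
  classical
  obtain ⟨⟨r, hrS⟩⟩ := hS.nonempty
  let d : V → ℕ := fun x =>
    if hx : x ∈ S then (G.induce S).dist ⟨x, hx⟩ ⟨r, hrS⟩ else G.dist x r
  have hex : ∀ x, ∃ y, (x ∈ S → y ∈ S) ∧ (x = r → y = r) ∧
      (x ≠ r → G.Adj x y ∧ ((x ∈ S ↔ y ∈ S) → d y < d x)) := by
    intro x
    by_cases hxr : x = r
    · subst hxr
      exact ⟨x, id, fun _ => rfl, fun h => absurd rfl h⟩
    by_cases hx : x ∈ S
    · obtain ⟨⟨y, hy⟩, hadj, hlt⟩ := exists_adj_dist_lt hS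
        (x := ⟨x, hx⟩) (r := ⟨r, hrS⟩) (by simpa using hxr)
      refine ⟨y, fun _ => hy, fun h => absurd h hxr, fun _ => ⟨hadj, fun _ => ?_⟩⟩
      simpa [d, hx, hy] using hlt
    · obtain ⟨y, hadj, hlt⟩ := exists_adj_dist_lt hG.connected hxr
      refine ⟨y, fun h => absurd h hx, fun h => absurd h hxr, fun _ => ⟨hadj, fun hiff => ?_⟩⟩
      have hy : y ∉ S := fun h => hx (hiff.2 h)
      simpa [d, hx, hy] using hlt
  choose f hfS hfr hf using hex
  refine ⟨f, ?_, hfS⟩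
  have hinj : Set.InjOn (fun x => s(x, f x)) ((Finset.univ.erase r : Finset V) : Set V) := by
    intro x hx y hy hxy
    simp only [Finset.coe_erase, Finset.coe_univ, Set.mem_sdiff, Set.mem_univ, true_and,
      Set.mem_singleton_iff] at hx hy
    rcases Sym2.eq_iff.1 hxy with h | ⟨h1, h2⟩
    · exact h.1
    · exfalso
      have hiff : x ∈ S ↔ y ∈ S := ⟨fun h => h2 ▸ hfS x h, fun h => h1 ▸ hfS y h⟩
      have a := (hf x hx).2 (by rwa [h2])
      have b := (hf y hy).2 (by rw [← h1]; exact hiff.symm)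
      rw [h2] at a
      rw [← h1] at b
      omega
  have hsub : (((Finset.univ.erase r).image (fun x => s(x, f x)) : Finset (Sym2 V)) :
      Set (Sym2 V)) ⊆ G.edgeSet := by
    intro e he
    simp only [Finset.coe_image, Set.mem_image, Finset.mem_coe, Finset.mem_erase] at he
    obtain ⟨x, ⟨hx, -⟩, rfl⟩ := he
    exact (hf x hx).1
  have heq := Set.eq_of_subset_of_ncard_le hsub (by
    rw [Set.ncard_coe_finset, Finset.card_image_of_injOn hinj,
      Finset.card_erase_of_mem (Finset.mem_univ _), Finset.card_univ]
    have h := (SimpleGraph.isTree_iff_connected_and_card.1 hG).2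
    rw [Nat.card_eq_fintype_card (α := V)] at h
    change Nat.card G.edgeSet ≤ _
    omega) (Set.toFinite _)
  ext x y
  rw [parentGraph_adj]
  constructor
  · rintro ⟨hne, h | h⟩
    · have hx : x ≠ r := fun hx => hne (by rw [← h, hfr x hx, hx])
      exact h ▸ (hf x hx).1
    · have hy : y ≠ r := fun hy => hne (by rw [← h, hfr y hy, hy])
      exact h ▸ (hf y hy).1.symm
  · intro hadj
    refine ⟨hadj.ne, ?_⟩
    have he : s(x, y) ∈ G.edgeSet := hadj
    rw [← heq] at he
    simp only [Finset.coe_image, Set.mem_image, Finset.mem_coe] at he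
    obtain ⟨z, -, hz⟩ := he
    rcases Sym2.eq_iff.1 hz with ⟨rfl, h⟩ | ⟨rfl, h⟩
    · exact Or.inl h
    · exact Or.inr h

/-- The total number of pairs (tree, subtree) is at most the number of pairs `(S, f)` with
`f` mapping `S` into itself; the right-hand side counts the latter by the size `k` of `S`. -/
lemma sum_subtreeCount_le (n : ℕ) :
    ∑ᶠ G : {G : SimpleGraph (Fin n) // G.IsTree}, subtreeCount G.1 ≤
      ∑ k ∈ Finset.range (n + 1), n.choose k * (k ^ k * n ^ (n - k)) := by
  classical
  have hcard : ∀ S : Finset (Fin n), (Fintype.piFinset fun x => if x ∈ S then S else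
      (Finset.univ : Finset (Fin n))).card = S.card ^ S.card * n ^ (n - S.card) := by
    intro S
    rw [Fintype.card_piFinset]
    simp only [apply_ite Finset.card, Finset.prod_ite, Finset.prod_const, Finset.card_univ,
      Fintype.card_fin]
    congr 2
    · simp
    · rw [Finset.filter_not, Finset.card_sdiff_of_subset (Finset.filter_subset _ _)]
      simp
  let B : Finset (Σ _ : Finset (Fin n), Fin n → Fin n) := Finset.univ.sigma fun S =>
    Fintype.piFinset fun x => if x ∈ S then S else Finset.univ
  have hB : B.card = ∑ k ∈ Finset.range (n + 1), n.choose k * (k ^ k * n ^ (n - k)) := by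
    rw [Finset.card_sigma, Finset.sum_congr rfl fun S _ => hcard S, ← Finset.powerset_univ,
      Finset.sum_powerset_apply_card (fun k => k ^ k * n ^ (n - k))]
    simp
  rw [← hB, finsum_eq_sum_of_fintype]
  simp only [subtreeCount]
  rw [← Nat.card_sigma, ← Fintype.card_coe, ← Nat.card_eq_fintype_card]
  choose f hf hfS using fun (t : Σ G : {G : SimpleGraph (Fin n) // G.IsTree},
    {S : Set (Fin n) // (G.1.induce S).Connected}) => exists_parentMap t.1.2 t.2.2
  refine Nat.card_le_card_of_injective (fun t => (⟨⟨t.2.1.toFinset, f t⟩, ?_⟩ : B)) ?_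
  · simp only [B, Finset.mem_sigma, Finset.mem_univ, true_and, Fintype.mem_piFinset]
    intro x
    split_ifs with hx
    · rw [Set.mem_toFinset] at hx ⊢
      exact hfS t x hx
    · exact Finset.mem_univ _
  · intro t u htu
    simp only [Subtype.mk.injEq, Sigma.mk.injEq, heq_eq_eq, Set.toFinset_inj] at htu
    have h1 : t.1.1 = u.1.1 := by rw [← hf t, ← hf u, htu.2]
    obtain ⟨⟨G, hG⟩, ⟨S, hS⟩⟩ := t
    obtain ⟨⟨G', hG'⟩, ⟨S', hS'⟩⟩ := u
    obtain ⟨h2, -⟩ := htu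
    dsimp only at h1 h2
    subst h1 h2
    rfl

/-- With `m = n - k`, the binomial theorem gives `n.choose k * k ^ k * m ^ m ≤ n ^ n`, and
`(n / m) ^ m ≤ exp (n / 2) ≤ 1.65 ^ n`. (The optimal base is `exp (1 / e) ≈ 1.445`.) -/
lemma choose_term_le {n k : ℕ} (hk : k ≤ n) :
    ((n.choose k * (k ^ k * n ^ (n - k)) : ℕ) : ℝ) ≤ (n : ℝ) ^ n * 1.65 ^ n := by
  obtain ⟨m, rfl⟩ := Nat.exists_eq_add_of_le hk
  rw [Nat.add_sub_cancel_left]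
  have hbin : (((k + m).choose k * (k ^ k * m ^ m) : ℕ) : ℝ) ≤ ((k + m : ℕ) : ℝ) ^ (k + m) := by
    have h := add_pow k m (k + m)
    have h2 := Finset.single_le_sum
      (f := fun i => k ^ i * m ^ (k + m - i) * (k + m).choose i)
      (fun _ _ => Nat.zero_le _) (show k ∈ Finset.range (k + m + 1) by simp)
    simp only [Nat.cast_id] at h
    rw [← h] at h2
    simp only [Nat.add_sub_cancel_left] at h2
    calc _ = ((k ^ k * m ^ m * (k + m).choose k : ℕ) : ℝ) := by push_cast; ring
      _ ≤ (((k + m) ^ (k + m) : ℕ) : ℝ) := by exact_mod_cast h2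
      _ = _ := by push_cast; rfl
  -- From `exp (u - 1) ≥ u` with `u = x / 2` one gets `x ≤ (2 / e) * exp (x / 2) ≤ exp (x / 2)`;
  -- it is applied to `x = (k + m) / m` and raised to the power `m`.
  have hpow : ((k + m : ℕ) : ℝ) ^ m ≤ (m : ℝ) ^ m * 1.65 ^ (k + m) := by
    rcases Nat.eq_zero_or_pos m with rfl | hm
    · simp only [pow_zero, one_mul]
      exact one_le_pow₀ (by norm_num)
    have hm' : (0 : ℝ) < m := by exact_mod_cast hm
    have he := Real.exp_one_gt_d9
    have he' := Real.exp_one_lt_d9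
    have h1 : ((k + m : ℕ) : ℝ) / m ≤ Real.exp (((k + m : ℕ) : ℝ) / m * (1 / 2)) := by
      have h3 := Real.add_one_le_exp (((k + m : ℕ) : ℝ) / m * (1 / 2) - 1)
      rw [sub_add_cancel, Real.exp_sub, le_div_iff₀ (Real.exp_pos 1)] at h3
      have : (0 : ℝ) ≤ ((k + m : ℕ) : ℝ) / m := by positivity
      nlinarith
    have h2 : Real.exp (1 / 2) ≤ 1.65 := by
      have h4 : Real.exp (1 / 2) * Real.exp (1 / 2) = Real.exp 1 := by
        rw [← Real.exp_add]; norm_num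
      nlinarith [Real.exp_pos (1 / 2)]
    calc ((k + m : ℕ) : ℝ) ^ m = (m : ℝ) ^ m * (((k + m : ℕ) : ℝ) / m) ^ m := by
          rw [← mul_pow, mul_div_cancel₀ _ hm'.ne']
      _ ≤ (m : ℝ) ^ m * (Real.exp (((k + m : ℕ) : ℝ) / m * (1 / 2))) ^ m := by gcongr
      _ = (m : ℝ) ^ m * Real.exp (1 / 2) ^ (k + m) := by
          rw [← Real.exp_nat_mul, ← Real.exp_nat_mul]
          congr 2
          field_simp
      _ ≤ _ := by gcongr
  rcases Nat.eq_zero_or_pos m with rfl | hm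
  · simp only [Nat.add_zero, Nat.choose_self, pow_zero, one_mul, mul_one, Nat.cast_pow]
    exact le_mul_of_one_le_right (by positivity) (one_le_pow₀ (by norm_num))
  have hm' : (0 : ℝ) < (m : ℝ) ^ m := by positivity
  refine le_of_mul_le_mul_right ?_ hm'
  calc _ = (((k + m).choose k * (k ^ k * m ^ m) : ℕ) : ℝ) * ((k + m : ℕ) : ℝ) ^ m := by
        push_cast; ring
    _ ≤ ((k + m : ℕ) : ℝ) ^ (k + m) * ((m : ℝ) ^ m * 1.65 ^ (k + m)) := by gcongr
    _ = _ := by ring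

/-! ### The first moment bound -/

lemma le_treeProb {n : ℕ} (hn : 1 ≤ n) :
    1 - 2 * ((n : ℝ) ^ 3 * (1.65 / 1.89756) ^ n) ≤
      treeProb n (fun G => (subtreeCount G : ℝ) ≤ (1.89756 : ℝ) ^ n) := by
  classical
  have : Nonempty (Fin n) := ⟨⟨0, hn⟩⟩
  have hn' : (1 : ℝ) ≤ n := by exact_mod_cast hn
  set t : ℕ := Nat.card {G : SimpleGraph (Fin n) // G.IsTree} with ht
  have hcay : (n : ℝ) ^ n ≤ t * n ^ 2 := by
    have h := cayley_lower (Fin n)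
    rw [Fintype.card_fin, ← ht] at h
    have h' : n ^ n ≤ t * n ^ 2 := by
      calc n ^ n = n ^ (n - 1) * n := by rw [← pow_succ, Nat.sub_add_cancel hn]
        _ ≤ t * n * n := by gcongr
        _ = _ := by ring
    exact_mod_cast h'
  have htpos : (0 : ℝ) < t := by
    have : (0 : ℝ) < (n : ℝ) ^ n := by positivity
    by_contra hle
    have : (t : ℝ) * n ^ 2 ≤ 0 := mul_nonpos_of_nonpos_of_nonneg (not_lt.1 hle) (by positivity)
    linarith
  set c : ℝ := 1.89756 with hc
  let Tree := {G : SimpleGraph (Fin n) // G.IsTree}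
  let good : Finset Tree := {G | (subtreeCount G.1 : ℝ) ≤ c ^ n}
  let bad : Finset Tree := {G | ¬ (subtreeCount G.1 : ℝ) ≤ c ^ n}
  have hgb : (good.card : ℝ) + bad.card = t := by
    have := Finset.card_filter_add_card_filter_not (s := (Finset.univ : Finset Tree))
      (fun G => (subtreeCount G.1 : ℝ) ≤ c ^ n)
    rw [Finset.card_univ, ← Nat.card_eq_fintype_card] at this
    exact_mod_cast this
  have hgood : Nat.card {G : SimpleGraph (Fin n) // G.IsTree ∧ (subtreeCount G : ℝ) ≤ c ^ n} =
      good.card := by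
    rw [← Nat.card_congr (Equiv.subtypeSubtypeEquivSubtypeInter
      (fun G : SimpleGraph (Fin n) => G.IsTree) fun G => (subtreeCount G : ℝ) ≤ c ^ n),
      Nat.card_eq_fintype_card, Fintype.card_subtype]
  -- Markov's inequality: every bad tree contributes more than `c ^ n` subtrees.
  have hbad : (bad.card : ℝ) * c ^ n ≤ (n + 1) * ((n : ℝ) ^ n * 1.65 ^ n) := by
    have h1 := sum_subtreeCount_le n
    rw [finsum_eq_sum_of_fintype] at h1
    calc (bad.card : ℝ) * c ^ n ≤ ∑ G ∈ bad, (subtreeCount G.1 : ℝ) := by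
          rw [← nsmul_eq_mul]
          refine Finset.card_nsmul_le_sum _ _ _ fun G hG => ?_
          simp only [bad, Finset.mem_filter] at hG
          exact (not_le.1 hG.2).le
      _ ≤ ∑ G : Tree, (subtreeCount G.1 : ℝ) :=
          Finset.sum_le_univ_sum_of_nonneg fun _ => Nat.cast_nonneg _
      _ ≤ ∑ k ∈ Finset.range (n + 1), ((n.choose k * (k ^ k * n ^ (n - k)) : ℕ) : ℝ) := by
          exact_mod_cast h1
      _ ≤ ∑ k ∈ Finset.range (n + 1), (n : ℝ) ^ n * 1.65 ^ n :=
          Finset.sum_le_sum fun k hk => choose_term_le (by simpa [Nat.lt_succ_iff] using hk)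
      _ = _ := by simp
  have hcpos : (0 : ℝ) < c ^ n := by positivity
  have hbad2 : (bad.card : ℝ) ≤ 2 * ((n : ℝ) ^ 3 * (1.65 / c) ^ n) * t := by
    refine le_of_mul_le_mul_right (hbad.trans ?_) hcpos
    calc ((n : ℝ) + 1) * ((n : ℝ) ^ n * 1.65 ^ n)
        ≤ (2 * n) * ((t * n ^ 2) * 1.65 ^ n) := by gcongr; linarith
      _ = _ := by rw [div_pow]; field_simp
  rw [treeProb, hgood, ← ht, le_div_iff₀ htpos]
  linarith

/-- A.a.s. the number of subtrees of a uniformly random labelled tree on `n` vertices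
is at most `1.89756 ^ n`. -/
theorem aas_subtree_upper_bound_189756 :
    Tendsto (fun n : ℕ =>
      treeProb n (fun G => (subtreeCount G : ℝ) ≤ (1.89756 : ℝ) ^ n))
      atTop (𝓝 1) := by
  have hlim : Tendsto (fun n : ℕ => 1 - 2 * ((n : ℝ) ^ 3 * (1.65 / 1.89756) ^ n))
      atTop (𝓝 1) := by
    have h := tendsto_pow_const_mul_const_pow_of_abs_lt_one 3
      (show |(1.65 / 1.89756 : ℝ)| < 1 by rw [abs_of_pos (by norm_num)]; norm_num)
    simpa using (h.const_mul 2).const_sub 1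
  refine tendsto_of_tendsto_of_tendsto_of_le_of_le' hlim tendsto_const_nhds ?_ ?_
  · filter_upwards [eventually_ge_atTop 1] with n hn using le_treeProb hn
  · refine Eventually.of_forall fun n => div_le_one_of_le₀ ?_ (Nat.cast_nonneg _)
    exact_mod_cast Nat.card_le_card_of_injective
      (fun G : {G : SimpleGraph (Fin n) // G.IsTree ∧
        (subtreeCount G : ℝ) ≤ (1.89756 : ℝ) ^ n} =>
        (⟨G.1, G.2.1⟩ : {G : SimpleGraph (Fin n) // G.IsTree}))
      (fun a b hab => Subtype.ext (by simpa using hab))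
end
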